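/- arXiv:1701.00787 — 2 statements merged into one kernel-verified Lean document; each statement's English description precedes it below -/
import Mathlib

section
/- Let λ > 0 be real and let δ be a real number with δ ≥ ⌈λ⌉ + 1. Then for every n ∈ ℕ (n ≥ 0) and every t ∈ (0, π], the integral F_n^{λ,δ}(t) = ∫_0^t (t-θ)^δ C_n^λ(cos θ) (sin θ)^{2λ} dθ is strictly positive. -/
open MeasureTheory Real Set

/-- Generalized binomial coefficient `C(u, v) = Γ(u+1) / (Γ(v+1) Γ(u-v+1))`. -/
noncomputable def genBinom (u v : ℝ) : ℝ :=
  Real.Gamma (u + 1) / (Real.Gamma (v + 1) * Real.Gamma (u - v + 1))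

/-- Jacobi polynomial `P_n^{(a,b)}(x)`. -/
noncomputable def jacobiP (n : ℕ) (a b x : ℝ) : ℝ :=
  ∑ k ∈ Finset.range (n + 1),
    genBinom ((n : ℝ) + a) ((n : ℝ) - (k : ℝ)) * genBinom ((n : ℝ) + b) (k : ℝ) *
      ((x - 1) / 2) ^ k * ((x + 1) / 2) ^ (n - k)

/-- `F_n^{(α,β),δ}(t)`. -/
noncomputable def FJ (n : ℕ) (α β δ t : ℝ) : ℝ :=
  ∫ θ in (0:ℝ)..t, (t - θ) ^ δ * jacobiP n (α - 1/2) (β - 1/2) (Real.cos θ) *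
    (Real.sin (θ / 2)) ^ (2 * α) * (Real.cos (θ / 2)) ^ (2 * β)

/-- Pochhammer symbol `(a)_n = a (a+1) ⋯ (a+n-1)`. -/
noncomputable def poch (a : ℝ) (n : ℕ) : ℝ := Polynomial.eval a (ascPochhammer ℝ n)

/-- Gegenbauer polynomial `C_n^λ(x) = ((2λ)_n/(λ+1/2)_n) P_n^{(λ-1/2,λ-1/2)}(x)`. -/
noncomputable def gegenbauerC (n : ℕ) (lam x : ℝ) : ℝ :=
  (poch (2 * lam) n / poch (lam + 1/2) n) * jacobiP n (lam - 1/2) (lam - 1/2) x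

/-- `F_n^{λ,δ}(t) = ∫_0^t (t-θ)^δ C_n^λ(cos θ) (sin θ)^{2λ} dθ`. -/
noncomputable def FG (n : ℕ) (lam δ t : ℝ) : ℝ :=
  ∫ θ in (0:ℝ)..t, (t - θ) ^ δ * gegenbauerC n lam (Real.cos θ) * (Real.sin θ) ^ (2 * lam)


noncomputable def geg (l : ℝ) : ℕ → Polynomial ℝ
  | 0 => 1
  | 1 => Polynomial.C (2 * l) * Polynomial.X
  | (n + 2) => Polynomial.C (1 / ((n : ℝ) + 2)) *
      (Polynomial.C (2 * ((n : ℝ) + 1 + l)) * Polynomial.X * geg l (n + 1)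
        - Polynomial.C ((n : ℝ) + 2 * l) * geg l n)

lemma geg_zero (l : ℝ) : geg l 0 = 1 := by rw [geg]
lemma geg_one (l : ℝ) : geg l 1 = 2 * Polynomial.C l * Polynomial.X := by
  rw [geg, Polynomial.C_mul]; rfl

lemma natpoly_ne (n : ℕ) : ((n : Polynomial ℝ) + 2) ≠ 0 := by
  have : ((n + 2 : ℕ) : Polynomial ℝ) ≠ 0 := Nat.cast_ne_zero.mpr (by omega)
  push_cast at this; exact this

lemma c2 : (Polynomial.C 2 : Polynomial ℝ) = 2 := rfl

lemma geg_rec (l : ℝ) (n : ℕ) : ((n : Polynomial ℝ) + 2) * geg l (n + 2) =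
    2 * ((n : Polynomial ℝ) + 1 + Polynomial.C l) * Polynomial.X * geg l (n + 1)
      - ((n : Polynomial ℝ) + 2 * Polynomial.C l) * geg l n := by
  have h1 : ((n : Polynomial ℝ) + 2) = Polynomial.C ((n : ℝ) + 2) := by simp [c2]
  have h0 : ((n : ℝ) + 2) ≠ 0 := by positivity
  rw [geg, h1, ← mul_assoc, ← Polynomial.C_mul, mul_one_div_cancel h0]
  simp [c2]

lemma geg_rel (l : ℝ) (n : ℕ) :
    (Polynomial.X * (geg l (n + 1)).derivative - (geg l n).derivative
      = ((n : Polynomial ℝ) + 1) * geg l (n + 1)) ∧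
    ((geg l (n + 1)).derivative - Polynomial.X * (geg l n).derivative
      = ((n : Polynomial ℝ) + 2 * Polynomial.C l) * geg l n) := by
  induction n with
  | zero => 
    constructor
    · rw [geg_zero, zero_add, geg_one]; simp; ring
    · rw [geg_zero, zero_add, geg_one]; simp
  | succ n ih =>
    obtain ⟨hB, hE⟩ := ih
    have hr := geg_rec l n
    have hd := congrArg Polynomial.derivative hr
    simp only [Polynomial.derivative_mul, Polynomial.derivative_add, Polynomial.derivative_sub,
      Polynomial.derivative_natCast, Polynomial.derivative_C, Polynomial.derivative_X,
      Polynomial.derivative_one, Polynomial.derivative_ofNat] at hd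
    have hE' : (geg l (n + 1 + 1)).derivative - Polynomial.X * (geg l (n + 1)).derivative
      = (((n + 1 : ℕ) : Polynomial ℝ) + 2 * Polynomial.C l) * geg l (n + 1) := by
      apply mul_left_cancel₀ (natpoly_ne n)
      push_cast
      linear_combination hd + ((n : Polynomial ℝ) + 2 * Polynomial.C l) * hB
    refine ⟨?_, hE'⟩
    push_cast at hE' ⊢
    linear_combination Polynomial.X * hE' - hE + Polynomial.X * hB  - hr

/-- `(1-X²) G_{n+1}' = -(n+1) X G_{n+1} + (n+2l) G_n` -/
lemma geg_d1 (l : ℝ) (n : ℕ) : (1 - Polynomial.X ^ 2) * (geg l (n + 1)).derivative =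
    - ((n : Polynomial ℝ) + 1) * Polynomial.X * geg l (n + 1) + ((n : Polynomial ℝ) + 2 * Polynomial.C l) * geg l n := by
  obtain ⟨hB, hE⟩ := geg_rel l n
  linear_combination hE - Polynomial.X * hB

lemma geg_ode (l : ℝ) (n : ℕ) : (1 - Polynomial.X ^ 2) * (geg l n).derivative.derivative
    - (2 * Polynomial.C l + 1) * Polynomial.X * (geg l n).derivative
    + (n : Polynomial ℝ) * ((n : Polynomial ℝ) + 2 * Polynomial.C l) * geg l n = 0 := by
  cases n with
  | zero => simp [geg_zero]
  | succ n =>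
    have hd := congrArg Polynomial.derivative (geg_d1 l n)
    simp only [Polynomial.derivative_mul, Polynomial.derivative_add, Polynomial.derivative_sub,
      Polynomial.derivative_natCast, Polynomial.derivative_C, Polynomial.derivative_X,
      Polynomial.derivative_X_pow, Polynomial.derivative_neg,
      Polynomial.derivative_one, Polynomial.derivative_ofNat] at hd
    obtain ⟨hB, hE⟩ := geg_rel l n
    push_cast
    simp [c2] at hd
    linear_combination hd - ((n : Polynomial ℝ) + 2 * Polynomial.C l) * hB

lemma geg_deriv (l : ℝ) (n : ℕ) : (geg l (n + 1)).derivative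
    = 2 * Polynomial.C l * geg (l + 1) n := by
  induction n using Nat.twoStepInduction with
  | zero => rw [zero_add, geg_one, geg_zero]; simp
  | one => 
    have := (geg_rel l 1).2
    rw [geg_one] at this ⊢
    simp at this ⊢
    linear_combination this
  | more n ih1 ih2 =>
    apply mul_left_cancel₀ (natpoly_ne n)
    have hr := geg_rec (l + 1) n
    obtain ⟨hB, hE⟩ := geg_rel l (n + 1)
    obtain ⟨hB', hE'⟩ := geg_rel l (n + 2)
    simp only [Polynomial.C_add, Polynomial.C_1] at hr
    push_cast at *
    rw [ih1, ih2] at *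
    linear_combination ((n : Polynomial ℝ) + 2) * hE' - ((n : Polynomial ℝ) + 2 + 2 * Polynomial.C l) * hB - 2 * Polynomial.C l * hr

lemma geg_eval_one (l : ℝ) (n : ℕ) : (geg l n).eval 1 * n.factorial = poch (2 * l) n := by
  have key : ∀ n : ℕ, ((n : ℝ) + 1) * (geg l (n + 1)).eval 1 = (n + 2 * l) * (geg l n).eval 1 := by
    intro n
    have := congrArg (Polynomial.eval 1) (geg_d1 l n)
    simp at this
    linarith
  induction n with
  | zero => simp [geg_zero, poch]
  | succ n ih =>
    have h2 : poch (2 * l) (n + 1) = poch (2 * l) n * (2 * l + n) := by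
      simp [poch, ascPochhammer_succ_right]
    rw [h2, ← ih, Nat.factorial_succ]
    push_cast
    linear_combination (n.factorial : ℝ) * key n

lemma geg_natDegree (l : ℝ) (n : ℕ) : (geg l n).natDegree ≤ n := by
  induction n using Nat.twoStepInduction with
  | zero => simp [geg_zero]
  | one => rw [geg]; exact (Polynomial.natDegree_C_mul_le _ _).trans Polynomial.natDegree_X_le
  | more n ih1 ih2 =>
    rw [geg]
    refine (Polynomial.natDegree_C_mul_le _ _).trans ?_
    refine (Polynomial.natDegree_sub_le _ _).trans (max_le ?_ ?_)
    · rw [mul_assoc]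
      refine (Polynomial.natDegree_C_mul_le _ _).trans ?_
      refine Polynomial.natDegree_mul_le.trans ?_
      simp only [Polynomial.natDegree_X]; omega
    · refine (Polynomial.natDegree_C_mul_le _ _).trans (by omega)

lemma geg_coeff_pos (l : ℝ) (hl : 0 < l) (n : ℕ) : 0 < (geg l n).coeff n := by
  induction n using Nat.twoStepInduction with
  | zero => simp [geg_zero]
  | one => rw [geg]; simp [hl]
  | more n ih1 ih2 =>
    rw [geg]
    have h0 : (geg l n).coeff (n + 2) = 0 :=
      Polynomial.coeff_eq_zero_of_natDegree_lt (by have := geg_natDegree l n; omega)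
    rw [Polynomial.coeff_C_mul, Polynomial.coeff_sub, mul_assoc, Polynomial.coeff_C_mul,
      Polynomial.coeff_C_mul, Polynomial.coeff_X_mul, h0]
    simp only [mul_zero, sub_zero]
    positivity


lemma genBinom_succ (u v : ℝ) (hv : -1 < v) (huv : 0 < u - v) :
    (v + 1) * genBinom u (v + 1) = (u - v) * genBinom u v := by
  unfold genBinom
  have h1 : Real.Gamma (v + 1 + 1) = (v + 1) * Real.Gamma (v + 1) :=
    Real.Gamma_add_one (by linarith)
  have h2 : Real.Gamma (u - v + 1) = (u - v) * Real.Gamma (u - v) :=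
    Real.Gamma_add_one (by linarith)
  have h3 : u - (v + 1) + 1 = u - v := by ring
  have p1 : Real.Gamma (v + 1) ≠ 0 := (Real.Gamma_pos_of_pos (by linarith)).ne'
  have p2 : Real.Gamma (u - v) ≠ 0 := (Real.Gamma_pos_of_pos (by linarith)).ne'
  have p3 : v + 1 ≠ 0 := by linarith
  have p4 : u - v ≠ 0 := by linarith
  rw [h1, h2, h3]
  field_simp

lemma genBinom_zero (u : ℝ) (hu : -1 < u) : genBinom u 0 = 1 := by
  unfold genBinom
  have p1 : Real.Gamma (u + 1) ≠ 0 := (Real.Gamma_pos_of_pos (by linarith)).ne'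
  simp [p1]

lemma poch_succ (a : ℝ) (n : ℕ) : poch a (n + 1) = poch a n * (a + n) := by
  simp [poch, ascPochhammer_succ_right]

lemma poch_succ_left (a : ℝ) (n : ℕ) : poch a (n + 1) = a * poch (a + 1) n := by
  simp [poch, ascPochhammer_succ_left, Polynomial.eval_comp]

lemma poch_pos (a : ℝ) (ha : 0 < a) (n : ℕ) : 0 < poch a n := ascPochhammer_pos n a ha

lemma genBinom_top (a : ℝ) (ha : -1 < a) (n : ℕ) :
    genBinom (n + a) n * n.factorial = poch (a + 1) n := by
  have h : poch (a + 1) n * Real.Gamma (a + 1) = Real.Gamma (n + a + 1) := by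
    induction n with
    | zero => simp [poch]
    | succ n ih =>
      rw [poch_succ, mul_right_comm, ih]
      have := Real.Gamma_add_one (s := n + a + 1) (by have : (0:ℝ) ≤ n := Nat.cast_nonneg n; linarith)
      push_cast
      rw [show (n : ℝ) + 1 + a + 1 = n + a + 1 + 1 by ring, this]; ring
  unfold genBinom
  rw [← h, Real.Gamma_nat_eq_factorial]
  have p1 : Real.Gamma (a + 1) ≠ 0 := (Real.Gamma_pos_of_pos (by linarith)).ne'
  have p2 : (n.factorial : ℝ) ≠ 0 := by positivity
  rw [show (n : ℝ) + a - n + 1 = a + 1 by ring]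
  field_simp

lemma jacobi_one (n : ℕ) (a b : ℝ) (ha : -1 < a) (hb : -1 < b) :
    jacobiP n a b 1 * n.factorial = poch (a + 1) n := by
  unfold jacobiP
  rw [Finset.sum_range_succ', Finset.sum_eq_zero]
  · have : (0:ℝ) ≤ n := Nat.cast_nonneg n
    simp [genBinom_zero (n + b) (by linarith), genBinom_top a ha]
  · intro k _; simp

lemma jacobi_deriv (n : ℕ) (a b : ℝ) (ha : -1 < a) (hb : -1 < b) (x : ℝ) :
    HasDerivAt (jacobiP (n + 1) a b)
      ((n + a + b + 2) / 2 * jacobiP n (a + 1) (b + 1) x) x := by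
  unfold jacobiP
  have key : ∀ k ∈ Finset.range (n + 1 + 1), HasDerivAt (fun x : ℝ =>
     genBinom (((n + 1 : ℕ) : ℝ) + a) (((n + 1 : ℕ) : ℝ) - (k : ℝ)) *
       genBinom (((n + 1 : ℕ) : ℝ) + b) (k : ℝ) *
      ((x - 1) / 2) ^ k * ((x + 1) / 2) ^ (n + 1 - k))
      (genBinom (((n + 1 : ℕ) : ℝ) + a) (((n + 1 : ℕ) : ℝ) - (k : ℝ)) *
       genBinom (((n + 1 : ℕ) : ℝ) + b) (k : ℝ) *
        (k * ((x - 1) / 2) ^ (k - 1) * (1 / 2)) * ((x + 1) / 2) ^ (n + 1 - k) +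
      genBinom (((n + 1 : ℕ) : ℝ) + a) (((n + 1 : ℕ) : ℝ) - (k : ℝ)) *
       genBinom (((n + 1 : ℕ) : ℝ) + b) (k : ℝ) *
        ((x - 1) / 2) ^ k * (((n + 1 - k : ℕ) : ℝ) * ((x + 1) / 2) ^ (n + 1 - k - 1) * (1 / 2))) x := by
    intro k _
    have h1 : HasDerivAt (fun x : ℝ => (x - 1) / 2) (1 / 2) x :=
      ((hasDerivAt_id x).sub_const 1).div_const 2
    have h2 : HasDerivAt (fun x : ℝ => (x + 1) / 2) (1 / 2) x :=
      ((hasDerivAt_id x).add_const 1).div_const 2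
    exact ((h1.fun_pow k).const_mul _).mul (h2.fun_pow (n + 1 - k))
  refine (HasDerivAt.fun_sum key).congr_deriv ?_
  rw [Finset.sum_add_distrib, Finset.sum_range_succ', Finset.sum_range_succ (n := n + 1),
    Finset.mul_sum]
  simp only [Nat.cast_zero, zero_mul, mul_zero, add_zero, Nat.sub_self]
  rw [← Finset.sum_add_distrib]
  apply Finset.sum_congr rfl
  intro k hk
  have hk' : k ≤ n := by simpa [Nat.lt_succ_iff] using hk
  have hkr : (k : ℝ) ≤ n := by exact_mod_cast hk'
  have hk0 : (0 : ℝ) ≤ k := Nat.cast_nonneg k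
  have e1 := genBinom_succ (n + 1 + b) k (by linarith) (by linarith)
  have e2 := genBinom_succ (n + 1 + a) (n - k) (by linarith) (by linarith)
  have s1 : n + 1 - (k + 1) = n - k := by omega
  have s2 : n + 1 - k - 1 = n - k := by omega
  have s3 : ((n + 1 - k : ℕ) : ℝ) = n - k + 1 := by
    rw [Nat.cast_sub (by omega)]; push_cast; ring
  rw [s1, s2, s3, Nat.add_sub_cancel]
  push_cast
  rw [show (n : ℝ) + (a + 1) = n + 1 + a by ring, show (n : ℝ) + (b + 1) = n + 1 + b by ring,
    show (n : ℝ) + 1 - (k + 1) = n - k by ring, show (n : ℝ) + 1 - k = n - k + 1 by ring]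
  linear_combination ((1/2) * ((x - 1) / 2) ^ k * ((x + 1) / 2) ^ (n - k)) *
    (genBinom (n + 1 + a) (n - k) * e1 + genBinom (n + 1 + b) k * e2)

lemma eq_of_deriv {f g f' : ℝ → ℝ} (hf : ∀ x, HasDerivAt f (f' x) x)
    (hg : ∀ x, HasDerivAt g (f' x) x) (h1 : f 1 = g 1) : f = g := by
  have h : ∀ x, HasDerivAt (fun x => f x - g x) 0 x := by
    intro x; exact ((hf x).fun_sub (hg x)).congr_deriv (sub_self _)
  funext x
  have := is_const_of_deriv_eq_zero (fun x => (h x).differentiableAt) (fun x => (h x).deriv) x 1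
  simp only [h1, sub_self] at this
  linarith

theorem gegenbauer_eq (n : ℕ) : ∀ (l : ℝ), 0 < l → 
    gegenbauerC n l = fun x => (geg l n).eval x := by
  induction n with
  | zero =>
    intro l hl
    funext x
    simp [gegenbauerC, geg_zero, poch, jacobiP]
    rw [genBinom_zero _ (by linarith)]; simp
  | succ n ih =>
    intro l hl
    have hp := poch_pos (l + 1/2) (by linarith)
    apply eq_of_deriv (f' := fun x => 2 * l * (geg (l + 1) n).eval x)
    · intro x
      have h := (jacobi_deriv n (l - 1/2) (l - 1/2) (by linarith) (by linarith) x).const_mul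
        (poch (2 * l) (n + 1) / poch (l + 1/2) (n + 1))
      unfold gegenbauerC
      refine h.congr_deriv ?_
      symm
      have hi := congrFun (ih (l + 1) (by linarith)) x
      rw [← hi]
      unfold gegenbauerC
      rw [show l + 1 - 1/2 = l - 1/2 + 1 by ring]
      have a1 := poch_succ (2 * l) (n + 1)
      rw [poch_succ_left, poch_succ_left] at a1
      rw [poch_succ_left (l + 1/2)]
      have hq := (poch_pos (l + 1 + 1/2) (by linarith) n).ne'
      rw [show 2 * l + 1 + 1 = 2 * (l + 1) by ring] at a1
      rw [show l + 1/2 + 1 = l + 1 + 1/2 by ring]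
      have hl2 : l + 1/2 ≠ 0 := by linarith
      generalize jacobiP n (l - 1/2 + 1) (l - 1/2 + 1) x = J
      generalize poch (l + 1 + 1/2) n = Q at *
      generalize poch (2 * (l + 1)) n = R at *
      generalize poch (2 * l) (n + 1) = S at *
      push_cast at a1
      have : 2 * l * (R / Q * J) = ((2 * l * ((2 * l + 1) * R)) / ((l + 1/2) * Q)) * J / 2 := by
        field_simp
      rw [this, a1]
      ring
    · intro x
      have h := (geg l (n + 1)).hasDerivAt x
      rw [geg_deriv] at h
      simpa using h
    · have h1 := jacobi_one (n + 1) (l - 1/2) (l - 1/2) (by linarith) (by linarith)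
      have h2 := geg_eval_one l (n + 1)
      have p2 : ((n + 1).factorial : ℝ) ≠ 0 := by positivity
      apply mul_right_cancel₀ p2
      rw [h2]
      unfold gegenbauerC
      rw [mul_assoc, h1, show l - 1/2 + 1 = l + 1/2 by ring]
      exact div_mul_cancel₀ _ (hp _).ne'


noncomputable def Lam (l : ℝ) (P : Polynomial ℝ) : ℝ :=
  ∫ θ in (0:ℝ)..π, P.eval (Real.cos θ) * (Real.sin θ) ^ (2 * l)

lemma Lam_cont (l : ℝ) (hl : 0 < l) (P : Polynomial ℝ) :
    Continuous (fun θ : ℝ => P.eval (Real.cos θ) * (Real.sin θ) ^ (2 * l)) := by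
  apply Continuous.mul
  · exact P.continuous.comp Real.continuous_cos
  · exact Real.continuous_sin.rpow_const (fun x => Or.inr (by linarith))

lemma Lam_add (l : ℝ) (hl : 0 < l) (P Q : Polynomial ℝ) : Lam l (P + Q) = Lam l P + Lam l Q := by
  unfold Lam
  rw [← intervalIntegral.integral_add ((Lam_cont l hl P).intervalIntegrable _ _)
    ((Lam_cont l hl Q).intervalIntegrable _ _)]
  simp only [Polynomial.eval_add, add_mul]

lemma Lam_C_mul (l : ℝ) (c : ℝ) (P : Polynomial ℝ) :
    Lam l (Polynomial.C c * P) = c * Lam l P := by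
  unfold Lam
  rw [← intervalIntegral.integral_const_mul]
  simp only [Polynomial.eval_mul, Polynomial.eval_C, mul_assoc]

noncomputable def LamL (l : ℝ) (hl : 0 < l) : Polynomial ℝ →ₗ[ℝ] ℝ where
  toFun := Lam l
  map_add' := Lam_add l hl
  map_smul' := by
    intro c P
    rw [Polynomial.smul_eq_C_mul, Lam_C_mul]; rfl

lemma Lam_selfadj (l : ℝ) (hl : 0 < l) (U V : Polynomial ℝ) :
    Lam l (((1 - Polynomial.X ^ 2) * U.derivative.derivative
        - (2 * Polynomial.C l + 1) * Polynomial.X * U.derivative) * V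
      - U * ((1 - Polynomial.X ^ 2) * V.derivative.derivative
        - (2 * Polynomial.C l + 1) * Polynomial.X * V.derivative)) = 0 := by
  set Q := U.derivative * V - U * V.derivative with hQ
  have hd : ∀ θ ∈ Set.uIcc (0:ℝ) π, HasDerivAt
      (fun θ : ℝ => -(Q.eval (Real.cos θ) * (Real.sin θ) ^ (2 * l + 1)))
      ((((1 - Polynomial.X ^ 2) * U.derivative.derivative
        - (2 * Polynomial.C l + 1) * Polynomial.X * U.derivative) * V
      - U * ((1 - Polynomial.X ^ 2) * V.derivative.derivative
        - (2 * Polynomial.C l + 1) * Polynomial.X * V.derivative)).eval (Real.cos θ) *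
          (Real.sin θ) ^ (2 * l)) θ := by
    intro θ hθ
    rw [uIcc_of_le Real.pi_pos.le] at hθ
    have hs : 0 ≤ Real.sin θ := Real.sin_nonneg_of_mem_Icc hθ
    have h1 := (Q.hasDerivAt (Real.cos θ)).comp θ (Real.hasDerivAt_cos θ)
    have h2 := (Real.hasDerivAt_sin θ).rpow_const (p := 2 * l + 1) (Or.inr (by linarith))
    refine ((h1.mul h2).neg).congr_deriv ?_
    have e1 : (Real.sin θ) ^ (2 * l + 1) = (Real.sin θ) ^ (2 * l) * Real.sin θ := by
      rw [Real.rpow_add_one' hs (by linarith)]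
    rw [show 2 * l + 1 - 1 = 2 * l by ring, e1]
    have e2 : Real.sin θ ^ 2 = 1 - Real.cos θ ^ 2 := by rw [Real.sin_sq]
    simp [hQ]
    linear_combination ((U.derivative.derivative.eval (Real.cos θ) * V.eval (Real.cos θ)
      - U.eval (Real.cos θ) * V.derivative.derivative.eval (Real.cos θ)) *
       (Real.sin θ) ^ (2 * l)) * e2
  unfold Lam
  rw [intervalIntegral.integral_eq_sub_of_hasDerivAt hd ((Lam_cont l hl _).intervalIntegrable _ _)]
  simp [Real.zero_rpow (show 2 * l + 1 ≠ 0 by linarith)]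

lemma Lam_sq_pos (l : ℝ) (hl : 0 < l) (P : Polynomial ℝ) (hP : P ≠ 0) : 0 < Lam l (P * P) := by
  unfold Lam
  have hfin : (P.roots.toFinset : Set ℝ).Finite := Finset.finite_toSet _
  obtain ⟨y, hy, hy2⟩ : ∃ y ∈ Set.Ioo (-1:ℝ) 1, y ∉ (P.roots.toFinset : Set ℝ) := by
    have := (Set.Ioo_infinite (show (-1:ℝ) < 1 by norm_num)).diff hfin
    obtain ⟨y, hy⟩ := this.nonempty
    exact ⟨y, hy.1, hy.2⟩
  have hy3 : P.eval y ≠ 0 := by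
    intro h; apply hy2; simp [hP, h]
  apply intervalIntegral.integral_pos Real.pi_pos
  · exact (Lam_cont l hl _).continuousOn
  · intro x hx
    have : 0 ≤ Real.sin x := Real.sin_nonneg_of_mem_Icc ⟨hx.1.le, hx.2⟩
    rw [Polynomial.eval_mul]
    exact mul_nonneg (mul_self_nonneg _) (Real.rpow_nonneg this _)
  · refine ⟨Real.arccos y, ⟨Real.arccos_nonneg _, Real.arccos_le_pi _⟩, ?_⟩
    rw [Real.cos_arccos hy.1.le hy.2.le, Polynomial.eval_mul, Real.sin_arccos]
    apply mul_pos (mul_self_pos.mpr hy3)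
    apply Real.rpow_pos_of_pos
    apply Real.sqrt_pos.mpr
    nlinarith [hy.1, hy.2]

lemma Lam_ode (l : ℝ) (hl : 0 < l) (n : ℕ) (U : Polynomial ℝ) :
    Lam l (((1 - Polynomial.X ^ 2) * U.derivative.derivative
        - (2 * Polynomial.C l + 1) * Polynomial.X * U.derivative) * geg l n) =
     - (n * (n + 2 * l)) * Lam l (U * geg l n) := by
  have h := Lam_selfadj l hl U (geg l n)
  have ho := geg_ode l n
  have e : ((1 - Polynomial.X ^ 2) * U.derivative.derivative
        - (2 * Polynomial.C l + 1) * Polynomial.X * U.derivative) * geg l n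
      - U * ((1 - Polynomial.X ^ 2) * (geg l n).derivative.derivative
        - (2 * Polynomial.C l + 1) * Polynomial.X * (geg l n).derivative)
      = ((1 - Polynomial.X ^ 2) * U.derivative.derivative
        - (2 * Polynomial.C l + 1) * Polynomial.X * U.derivative) * geg l n
        + Polynomial.C (n * (n + 2 * l)) * (U * geg l n) := by
    simp only [Polynomial.C_mul, Polynomial.C_add, Polynomial.C_eq_natCast, c2]
    linear_combination - U * ho
  rw [e, Lam_add l hl, Lam_C_mul] at h
  linarith

lemma Lam_X_pow (l : ℝ) (hl : 0 < l) (n : ℕ) (j : ℕ) (hj : j < n) :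
    Lam l (Polynomial.X ^ j * geg l n) = 0 := by
  induction j using Nat.strong_induction_on with
  | _ j ih =>
    have h := Lam_ode l hl n (Polynomial.X ^ j)
    have e : ((1 - Polynomial.X ^ 2) * (Polynomial.X ^ j : Polynomial ℝ).derivative.derivative
        - (2 * Polynomial.C l + 1) * Polynomial.X * (Polynomial.X ^ j : Polynomial ℝ).derivative)
          * geg l n =
        Polynomial.C ((j:ℝ) * ((j - 1 : ℕ) : ℝ)) * (Polynomial.X ^ (j - 2) * geg l n)
        + Polynomial.C (-((j:ℝ) * (j + 2 * l))) * (Polynomial.X ^ j * geg l n) := by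
      rcases j with _ | _ | j
      · simp
      · simp [c2]; ring
      · simp [c2, Polynomial.derivative_X_pow]
        ring
    rw [e, Lam_add l hl, Lam_C_mul, Lam_C_mul] at h
    have hz : (j:ℝ) * ((j - 1 : ℕ) : ℝ) * Lam l (Polynomial.X ^ (j - 2) * geg l n) = 0 := by
      rcases Nat.lt_or_ge j 2 with h2 | h2
      · interval_cases j <;> simp
      · rw [ih (j - 2) (by omega) (by omega), mul_zero]
    rw [hz, zero_add] at h
    have hjn : (j : ℝ) < n := by exact_mod_cast hj
    have hj0 : (0:ℝ) ≤ j := Nat.cast_nonneg j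
    have : ((n:ℝ) * (n + 2 * l) - j * (j + 2 * l)) * Lam l (Polynomial.X ^ j * geg l n) = 0 := by
      linarith
    rcases mul_eq_zero.mp this with h3 | h3
    · nlinarith
    · exact h3

lemma Lam_low (l : ℝ) (hl : 0 < l) (n : ℕ) (P : Polynomial ℝ) (hP : P.natDegree ≤ n) :
    Lam l (P * geg l n) = P.coeff n * Lam l (Polynomial.X ^ n * geg l n) := by
  have h : Lam l (P * geg l n) = ∑ j ∈ Finset.range (n + 1),
      P.coeff j * Lam l (Polynomial.X ^ j * geg l n) := by
    conv_lhs => rw [P.as_sum_range_C_mul_X_pow' (Nat.lt_succ_of_le hP), Finset.sum_mul]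
    change LamL l hl _ = _
    rw [map_sum]
    apply Finset.sum_congr rfl
    intro j _
    rw [mul_assoc]
    exact Lam_C_mul _ _ _
  rw [h, Finset.sum_range_succ, Finset.sum_eq_zero, zero_add]
  intro j hj
  rw [Lam_X_pow l hl n j (by simpa using hj), mul_zero]

lemma Lam_Xn_pos (l : ℝ) (hl : 0 < l) (n : ℕ) : 0 < Lam l (Polynomial.X ^ n * geg l n) := by
  have hc := geg_coeff_pos l hl n
  have hne : geg l n ≠ 0 := by intro h; simp [h] at hc
  have h := Lam_sq_pos l hl _ hne
  rw [Lam_low l hl n _ (geg_natDegree l n)] at h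
  exact (pos_iff_pos_of_mul_pos h).mp hc

lemma conn_pos (l : ℝ) (hl : 0 < l) (n : ℕ) : 0 < Lam l (geg 1 n * geg l n) := by
  rw [Lam_low l hl n _ (geg_natDegree 1 n)]
  exact mul_pos (geg_coeff_pos 1 one_pos n) (Lam_Xn_pos l hl n)

lemma conn_nonneg (l : ℝ) (hl : 0 < l) (hl1 : l ≤ 1) (n : ℕ) (k : ℕ) :
    0 ≤ Lam l (geg 1 k * geg l n) ∧ 0 ≤ Lam l ((geg 1 k).derivative * geg l n) ∧
    0 ≤ Lam l (geg 1 (k + 1) * geg l n) ∧ 0 ≤ Lam l ((geg 1 (k + 1)).derivative * geg l n) := by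
  -- low-order facts
  have low : ∀ k ≤ n, 0 ≤ Lam l (geg 1 k * geg l n) := by
    intro k hk
    rcases hk.lt_or_eq with h | h
    · rw [Lam_low l hl n _ ((geg_natDegree 1 k).trans hk),
        Polynomial.coeff_eq_zero_of_natDegree_lt (lt_of_le_of_lt (geg_natDegree 1 k) h), zero_mul]
    · rw [h]; exact (conn_pos l hl n).le
  -- derivative relation
  have dr : ∀ k, Lam l ((geg 1 (k + 2)).derivative * geg l n) =
      Lam l ((geg 1 k).derivative * geg l n) + 2 * (k + 2) * Lam l (geg 1 (k + 1) * geg l n) := by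
    intro k
    have hB := (geg_rel 1 k).1
    have hE := (geg_rel 1 (k + 1)).2
    rw [← Lam_C_mul, ← Lam_add l hl]
    congr 1
    simp only [Polynomial.C_mul, Polynomial.C_add, Polynomial.C_eq_natCast, c2]
    push_cast at hE
    simp only [Polynomial.C_1] at hE
    linear_combination geg l n * (hE + hB)
  have cr : ∀ k : ℕ, (((k:ℝ) + 1) * (k + 1 + 2 * l) - n * (n + 2 * l)) * Lam l (geg 1 (k + 1) * geg l n)
      = 2 * (1 - l) * Lam l ((geg 1 k).derivative * geg l n) := by
    intro k
    have h := Lam_ode l hl n (geg 1 (k + 1))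
    have ho := geg_ode 1 (k + 1)
    have hB := (geg_rel 1 k).1
    have e : ((1 - Polynomial.X ^ 2) * (geg 1 (k + 1)).derivative.derivative
        - (2 * Polynomial.C l + 1) * Polynomial.X * (geg 1 (k + 1)).derivative) * geg l n
        = Polynomial.C (2 * (1 - l)) * ((geg 1 k).derivative * geg l n) + 
          Polynomial.C (2 * (1 - l) * (k + 1) - (k + 1) * (k + 1 + 2)) *
            (geg 1 (k + 1) * geg l n) := by
      simp only [Polynomial.C_mul, Polynomial.C_add, Polynomial.C_sub, Polynomial.C_1,
        Polynomial.C_eq_natCast, c2]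
      push_cast at ho
      simp only [Polynomial.C_1] at ho
      linear_combination geg l n * (ho + 2 * (1 - Polynomial.C l) * hB)
    rw [e, Lam_add l hl, Lam_C_mul, Lam_C_mul] at h
    push_cast at h
    linear_combination -h
  have step : ∀ k, 0 ≤ Lam l ((geg 1 k).derivative * geg l n) →
      0 ≤ Lam l (geg 1 (k + 1) * geg l n) := by
    intro k hk
    rcases Nat.lt_or_ge n (k + 1) with h | h
    · have h1 := cr k
      have h2 : (n : ℝ) < k + 1 := by exact_mod_cast h
      have h0 : (0:ℝ) ≤ n := Nat.cast_nonneg n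
      have h3 : 0 < (((k:ℝ) + 1) * (k + 1 + 2 * l) - n * (n + 2 * l)) := by nlinarith
      by_contra hneg
      push Not at hneg
      have h4 := mul_neg_of_pos_of_neg h3 hneg
      have h5 : 0 ≤ 2 * (1 - l) * Lam l ((geg 1 k).derivative * geg l n) :=
        mul_nonneg (by linarith) hk
      linarith
    · exact low _ h
  induction k with
  | zero =>
    have d0 : (geg 1 0).derivative = 0 := by simp [geg_zero]
    have d1 : (geg 1 1).derivative = 2 * geg 1 0 := by rw [geg_one, geg_zero]; simp
    have h0 := low 0 (Nat.zero_le _)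
    have hd0 : Lam l ((geg 1 0).derivative * geg l n) = 0 := by rw [d0]; simp [Lam]
    have hd1 : Lam l ((geg 1 1).derivative * geg l n) = 2 * Lam l (geg 1 0 * geg l n) := by
      rw [d1, ← Lam_C_mul, c2, mul_assoc]
    refine ⟨h0, hd0.ge, step 0 hd0.ge, ?_⟩
    rw [zero_add, hd1]; linarith
  | succ k ih =>
    obtain ⟨a, b, c, d⟩ := ih
    refine ⟨c, d, step _ d, ?_⟩
    rw [dr k]
    positivity


lemma pos_lemma (N t : ℝ) (hN : 0 < N) (ht : 0 < t) (y y1 y2 y3 : ℝ → ℝ)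
    (h0 : ∀ s, HasDerivAt y (y1 s) s) (h1 : ∀ s, HasDerivAt y1 (y2 s) s)
    (h2 : ∀ s, HasDerivAt y2 (y3 s) s) (h3 : Continuous y3)
    (i0 : y 0 = 0) (i1 : y1 0 = 0) (i2 : y2 0 = 0)
    (hg : ∀ s ∈ Set.Icc 0 t, 0 ≤ y3 s + N ^ 2 * y1 s)
    (ε : ℝ) (hε : 0 < ε) (hg' : ∀ s ∈ Set.Ioo 0 ε, s < t → 0 < y3 s + N ^ 2 * y1 s) :
    0 < y t := by
  have hN2 : N ≠ 0 := hN.ne'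
  set G : ℝ → ℝ := fun s => (1 - Real.cos (N * (t - s))) / N ^ 2 * (y3 s + N ^ 2 * y1 s) with hG
  have hy1 : Continuous y1 := continuous_iff_continuousAt.mpr fun s => (h1 s).continuousAt
  have hGc : Continuous G := by
    apply Continuous.mul
    · fun_prop
    · fun_prop
  have hd : ∀ s ∈ Set.uIcc 0 t, HasDerivAt (fun s => y2 s * ((1 - Real.cos (N * (t - s))) / N ^ 2)
      + y1 s * (Real.sin (N * (t - s)) / N) + y s) (G s) s := by
    intro s _
    have hu : HasDerivAt (fun s => N * (t - s)) (-N) s := by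
      simpa using ((hasDerivAt_id s).const_sub t).const_mul N
    have e1 := (((hu.cos).const_sub 1).div_const (N ^ 2))
    have e2 := (hu.sin).div_const N
    refine ((((h2 s).mul e1).add ((h1 s).mul e2)).add (h0 s)).congr_deriv ?_
    simp only [hG]
    field_simp
    ring
  have hint := intervalIntegral.integral_eq_sub_of_hasDerivAt hd (hGc.intervalIntegrable _ _)
  simp only [sub_self, mul_zero, Real.cos_zero, Real.sin_zero, zero_div, i0, i1, i2, zero_mul,
    add_zero, zero_add, sub_zero] at hint
  rw [← hint]
  apply intervalIntegral.integral_pos ht hGc.continuousOn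
  · intro s hs
    apply mul_nonneg
    · apply div_nonneg _ (by positivity)
      linarith [Real.cos_le_one (N * (t - s))]
    · exact hg s ⟨hs.1.le, hs.2⟩
  · set η := min (min ε t) (2 * π / N) with hη
    have hηpos : 0 < η := lt_min (lt_min hε ht) (by positivity)
    have a1 : η ≤ ε := (min_le_left _ _).trans (min_le_left _ _)
    have a2 : η ≤ t := (min_le_left _ _).trans (min_le_right _ _)
    have a3 : η * N ≤ 2 * π := by
      have := min_le_right (min ε t) (2 * π / N)
      rw [← hη] at this
      calc η * N ≤ (2 * π / N) * N := by gcongr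
        _ = _ := by field_simp
    have key : ∀ s ∈ Set.Ioo 0 η, Real.cos (N * (t - s)) ≠ 1 → 0 < G s := by
      intro s hs hc
      apply mul_pos
      · apply div_pos _ (by positivity)
        have := lt_of_le_of_ne (Real.cos_le_one (N * (t - s))) hc
        linarith
      · exact hg' s ⟨hs.1, hs.2.trans_le a1⟩ (hs.2.trans_le a2)
    by_cases hc : Real.cos (N * (t - η / 2)) = 1
    · refine ⟨η / 4, ⟨by linarith, by linarith⟩, key _ ⟨by linarith, by linarith⟩ ?_⟩
      intro hc2
      obtain ⟨p, hp⟩ := (Real.cos_eq_one_iff _).mp hc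
      obtain ⟨q, hq⟩ := (Real.cos_eq_one_iff _).mp hc2
      have hpi := Real.pi_pos
      have hpq : ((q - p : ℤ) : ℝ) * (2 * π) = N * η / 4 := by
        push_cast
        linear_combination hq - hp
      have b1 : (0:ℝ) < ((q - p : ℤ) : ℝ) := by
        have : 0 < N * η / 4 := by positivity
        by_contra hcon
        push Not at hcon
        nlinarith
      have b2 : ((q - p : ℤ) : ℝ) < 1 := by
        by_contra hcon
        push Not at hcon
        nlinarith
      have b3 : 0 < q - p := by exact_mod_cast b1
      have b4 : q - p < 1 := by exact_mod_cast b2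
      omega
    · exact ⟨η / 2, ⟨by linarith, by linarith⟩, key _ ⟨by linarith, by linarith⟩ hc⟩

noncomputable def aa (t : ℝ) (n : ℕ) : ℝ := if n = 0 then t ^ 3 / 3 else
  2 * t / n ^ 2 - 2 * Real.sin (n * t) / n ^ 3

lemma aa_pos (t : ℝ) (ht : 0 < t) (k : ℕ) : 0 < aa t k - aa t (k + 2) := by
  have main : ∀ M : ℝ, 0 < M → (∀ s, HasDerivAt (fun s => 2 * s / M ^ 2 - 2 * Real.sin (M * s) / M ^ 3)
      (2 * (1 - Real.cos (M * s)) / M ^ 2) s) ∧ 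
      (∀ s, HasDerivAt (fun s => 2 * (1 - Real.cos (M * s)) / M ^ 2)
      (2 * Real.sin (M * s) / M) s) ∧ 
      (∀ s, HasDerivAt (fun s => 2 * Real.sin (M * s) / M) (2 * Real.cos (M * s)) s) := by
    intro M hM
    have hu : ∀ s, HasDerivAt (fun s => M * s) M s := fun s => by
      simpa using (hasDerivAt_id s).const_mul M
    refine ⟨fun s => ?_, fun s => ?_, fun s => ?_⟩
    · refine ((((hasDerivAt_id s).const_mul 2).div_const (M ^ 2)).sub
        ((((hu s).sin).const_mul 2).div_const (M ^ 3))).congr_deriv ?_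
      field_simp
    · refine (((((hu s).cos).const_sub 1).const_mul 2).div_const (M ^ 2)).congr_deriv ?_
      field_simp
    · refine ((((hu s).sin).const_mul 2).div_const M).congr_deriv ?_
      field_simp
  have hN : (0:ℝ) < (k:ℝ) + 2 := by positivity
  obtain ⟨m0, m1, m2⟩ := main ((k:ℝ) + 2) hN
  have hn2 : (k + 2 ≠ 0) := by omega
  rcases Nat.eq_zero_or_pos k with hk | hk
  · subst hk
    simp only [aa, if_neg hn2, if_true]
    push_cast
    obtain ⟨m0, m1, m2⟩ := main 2 two_pos
    apply pos_lemma 2 t two_pos ht (fun t => t ^ 3 / 3 - (2 * t / 2 ^ 2 - 2 * Real.sin (2 * t) / 2 ^ 3))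
      (fun s => s ^ 2 - 2 * (1 - Real.cos (2 * s)) / 2 ^ 2)
      (fun s => 2 * s - 2 * Real.sin (2 * s) / 2)
      (fun s => 2 - 2 * Real.cos (2 * s))
    · intro s
      refine (((hasDerivAt_pow 3 s).div_const 3).sub (m0 s)).congr_deriv ?_
      norm_num
    · intro s
      refine ((hasDerivAt_pow 2 s).sub (m1 s)).congr_deriv ?_
      norm_num
    · intro s
      refine (((hasDerivAt_id s).const_mul 2).sub (m2 s)).congr_deriv ?_
      norm_num
    · fun_prop
    · simp
    · simp
    · simp
    · intro s _
      have : 2 - 2 * Real.cos (2 * s) + 2 ^ 2 * (s ^ 2 - 2 * (1 - Real.cos (2 * s)) / 2 ^ 2) = 4 * s ^ 2 := by ring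
      rw [this]; positivity
    · exact one_pos
    · intro s hs _
      have : 2 - 2 * Real.cos (2 * s) + 2 ^ 2 * (s ^ 2 - 2 * (1 - Real.cos (2 * s)) / 2 ^ 2) = 4 * s ^ 2 := by ring
      rw [this]; have := hs.1; positivity
  · have hk0 : (0:ℝ) < k := by exact_mod_cast hk
    obtain ⟨q0, q1, q2⟩ := main (k:ℝ) hk0
    simp only [aa, if_neg hn2, if_neg hk.ne']
    push_cast
    have hform : ∀ s, (2 * Real.cos (k * s) - 2 * Real.cos (((k:ℝ) + 2) * s)) + ((k:ℝ) + 2) ^ 2 *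
        (2 * (1 - Real.cos (k * s)) / (k:ℝ) ^ 2 - 2 * (1 - Real.cos (((k:ℝ) + 2) * s)) / ((k:ℝ) + 2) ^ 2)
        = 2 * (1 - Real.cos (k * s)) * ((((k:ℝ) + 2) ^ 2 - (k:ℝ) ^ 2) / (k:ℝ) ^ 2) := by
      intro s
      field_simp
      ring
    have hcoef : 0 < ((((k:ℝ) + 2) ^ 2 - (k:ℝ) ^ 2) / (k:ℝ) ^ 2) := by
      apply div_pos _ (by positivity)
      nlinarith
    apply pos_lemma ((k:ℝ) + 2) t hN ht (fun t => 2 * t / (k:ℝ) ^ 2 - 2 * Real.sin (k * t) / (k:ℝ) ^ 3 -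
        (2 * t / ((k:ℝ) + 2) ^ 2 - 2 * Real.sin (((k:ℝ) + 2) * t) / ((k:ℝ) + 2) ^ 3))
      (fun s => 2 * (1 - Real.cos (k * s)) / (k:ℝ) ^ 2 - 2 * (1 - Real.cos (((k:ℝ) + 2) * s)) / ((k:ℝ) + 2) ^ 2)
      (fun s => 2 * Real.sin (k * s) / k - 2 * Real.sin (((k:ℝ) + 2) * s) / ((k:ℝ) + 2))
      (fun s => 2 * Real.cos (k * s) - 2 * Real.cos (((k:ℝ) + 2) * s))
      (fun s => (q0 s).sub (m0 s)) (fun s => (q1 s).sub (m1 s)) (fun s => (q2 s).sub (m2 s))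
      (by fun_prop) (by simp) (by simp) (by simp) (ε := 2 * π / k)
    · intro s _
      rw [hform]
      have := Real.cos_le_one (k * s)
      exact mul_nonneg (by linarith) hcoef.le
    · positivity
    · intro s hs _
      rw [hform]
      have h1 := Real.cos_le_one (k * s)
      have h2 : Real.cos (k * s) ≠ 1 := by
        intro h
        have b1 : 0 < k * s := mul_pos hk0 hs.1
        have b2 : k * s < 2 * π := by
          have := hs.2
          rw [lt_div_iff₀ hk0] at this
          linarith
        rw [Real.cos_eq_one_iff_of_lt_of_lt (by linarith) b2] at h
        linarith
      have := lt_of_le_of_ne h1 h2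
      exact mul_pos (by linarith) hcoef


lemma hs_congr {f g : ℕ → ℝ} {a b : ℝ} (h : HasSum f a) (e1 : ∀ k, g k = f k) (e2 : b = a) :
    HasSum g b := by
  rw [e2, show g = f from funext e1]; exact h

lemma sum_cos2 (x : ℝ) (hx : x ∈ Set.Icc 0 (2 * π)) :
    HasSum (fun n : ℕ => 1 / (n:ℝ) ^ 2 * Real.cos (n * x)) (π ^ 2 / 6 - π * x / 2 + x ^ 2 / 4) := by
  have hpi := Real.pi_pos
  have h := hasSum_one_div_nat_pow_mul_cos one_ne_zero (x := x / (2 * π))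
    ⟨div_nonneg hx.1 (by positivity), by rw [div_le_one (by positivity)]; exact hx.2⟩
  convert h using 1
  · funext n
    congr 2
    field_simp
  · simp [Polynomial.bernoulli_def, Finset.sum_range_succ, Polynomial.eval_monomial, bernoulli_one, bernoulli_two, Nat.choose]
    field_simp
    ring

lemma sum_sin3 (x : ℝ) (hx : x ∈ Set.Icc 0 (2 * π)) :
    HasSum (fun n : ℕ => 1 / (n:ℝ) ^ 3 * Real.sin (n * x))
      (π ^ 2 * x / 6 - π * x ^ 2 / 4 + x ^ 3 / 12) := by
  have hpi := Real.pi_pos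
  have h := hasSum_one_div_nat_pow_mul_sin one_ne_zero (x := x / (2 * π))
    ⟨div_nonneg hx.1 (by positivity), by rw [div_le_one (by positivity)]; exact hx.2⟩
  convert h using 1
  · funext n
    congr 2
    field_simp
  · have b3 : bernoulli 3 = 0 := by
      rw [bernoulli_eq_bernoulli'_of_ne_one (by norm_num), bernoulli'_three]
    simp [Polynomial.bernoulli_def, Finset.sum_range_succ, Polynomial.eval_monomial, bernoulli_one, bernoulli_two, b3, Nat.choose, Nat.factorial]
    field_simp
    ring

noncomputable def ab (t : ℝ) (n : ℕ) : ℝ := 2 * t * (1 / (n:ℝ) ^ 2) - 2 * (1 / (n:ℝ) ^ 3 * Real.sin (n * t))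

lemma ab_sum (t : ℝ) (ht : t ∈ Set.Ioc 0 π) (θ : ℝ) (hθ : θ ∈ Set.Icc 0 π) :
    HasSum (fun n : ℕ => ab t n * Real.cos (n * θ)) (π / 2 * (max (t - θ) 0) ^ 2 - t ^ 3 / 6) := by
  obtain ⟨t0, t1⟩ := ht
  obtain ⟨x0, x1⟩ := hθ
  have h1 := (sum_cos2 θ ⟨x0, by linarith⟩).mul_left (2 * t)
  have h2 := sum_sin3 (t + θ) ⟨by linarith, by linarith⟩
  have e : ∀ n : ℕ, 2 * Real.sin (n * t) * Real.cos (n * θ) =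
      Real.sin (n * (t + θ)) + Real.sin (n * (t - θ)) := by
    intro n
    rw [mul_add, mul_sub, Real.sin_add, Real.sin_sub]; ring
  rcases le_total θ t with h | h
  · have h3 := sum_sin3 (t - θ) ⟨by linarith, by linarith⟩
    rw [max_eq_left (by linarith)]
    refine hs_congr (h1.sub (h2.add h3)) (fun n => ?_) ?_
    · beta_reduce
      unfold ab
      linear_combination (-(1 / (n:ℝ) ^ 3)) * e n
    · ring
  · have h3 := sum_sin3 (θ - t) ⟨by linarith, by linarith⟩
    rw [max_eq_right (by linarith)]
    refine hs_congr (h1.sub (h2.sub h3)) (fun n => ?_) ?_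
    · beta_reduce
      unfold ab
      have e2 : Real.sin (n * (t - θ)) = - Real.sin (n * (θ - t)) := by
        rw [← Real.sin_neg]; congr 1; ring
      have e1 := e n
      rw [e2] at e1
      linear_combination (-(1 / (n:ℝ) ^ 3)) * e1
    · ring

lemma ab_summable (t : ℝ) : Summable (ab t) := by
  have s2 : Summable (fun n : ℕ => 1 / (n:ℝ) ^ 2) := Real.summable_one_div_nat_pow.mpr (by norm_num)
  have s3 : Summable (fun n : ℕ => 1 / (n:ℝ) ^ 3) := Real.summable_one_div_nat_pow.mpr (by norm_num)
  refine (s2.mul_left (2 * t)).sub (Summable.mul_left 2 ?_)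
  refine Summable.of_norm_bounded s3 ?_
  intro n
  rw [norm_mul, Real.norm_of_nonneg (by positivity)]
  exact mul_le_of_le_one_right (by positivity) (Real.abs_sin_le_one _)

lemma aa_eq (t : ℝ) (n : ℕ) : aa t n = ab t n + if n = 0 then t ^ 3 / 3 else 0 := by
  unfold aa ab
  split_ifs with h
  · simp [h]
  · ring

lemma aa_summable (t : ℝ) : Summable (aa t) := by
  have : aa t = fun n => ab t n + if n = 0 then t ^ 3 / 3 else 0 := funext (aa_eq t)
  rw [this]
  exact (ab_summable t).add (hasSum_ite_eq 0 (t ^ 3 / 3)).summable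

lemma aad_summable (t : ℝ) : Summable (fun k => aa t k - aa t (k + 2)) :=
  (aa_summable t).sub ((summable_nat_add_iff 2).mpr (aa_summable t))

lemma sin_sum (t : ℝ) (ht : t ∈ Set.Ioc 0 π) (θ : ℝ) (hθ : θ ∈ Set.Icc 0 π) :
    HasSum (fun k : ℕ => (aa t k - aa t (k + 2)) * Real.sin ((k + 1) * θ))
      (π * (max (t - θ) 0) ^ 2 * Real.sin θ) := by
  have hb : ∀ g : ℕ → ℝ, (∀ n, |g n| ≤ 1) → Summable (fun n => ab t n * g n) := by
    intro g hg
    refine Summable.of_norm_bounded (ab_summable t).abs ?_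
    intro n
    rw [norm_mul]
    exact mul_le_of_le_one_right (norm_nonneg _) (hg n)
  have s1 := (hb (fun n => Real.sin ((n + 1) * θ)) (fun n => Real.abs_sin_le_one _)).hasSum
  have s2 := (hb (fun n => Real.sin ((n - 1) * θ)) (fun n => Real.abs_sin_le_one _)).hasSum
  have s0 := (ab_sum t ht θ hθ).mul_left (2 * Real.sin θ)
  have hd : (∑' n, ab t n * Real.sin (((n:ℝ) + 1) * θ)) - (∑' n, ab t n * Real.sin (((n:ℝ) - 1) * θ))
      = 2 * Real.sin θ * (π / 2 * (max (t - θ) 0) ^ 2 - t ^ 3 / 6) := by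
    apply (s1.sub s2).unique
    refine hs_congr s0 (fun n => ?_) rfl
    beta_reduce
    rw [add_mul, sub_mul, one_mul, Real.sin_add, Real.sin_sub]
    ring
  have s3 := (hasSum_nat_add_iff' 2).mpr s2
  have s4 := hasSum_ite_eq (0:ℕ) (t ^ 3 / 3 * Real.sin θ)
  refine hs_congr ((s1.sub s3).add s4) (fun k => ?_) ?_
  · beta_reduce
    rw [aa_eq t k, aa_eq t (k + 2), if_neg (by omega : k + 2 ≠ 0)]
    push_cast
    rw [show (k:ℝ) + 2 - 1 = k + 1 by ring]
    split_ifs with h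
    · subst h; simp; ring
    · ring
  · rw [sub_sub_eq_add_sub, add_sub_right_comm, hd]
    simp [Finset.sum_range_succ, ab]
    ring

lemma sin_geg (k : ℕ) (θ : ℝ) :
    Real.sin ((k + 1) * θ) = Real.sin θ * (geg 1 k).eval (Real.cos θ) := by
  induction k using Nat.twoStepInduction with
  | zero => simp [geg_zero]
  | one => rw [geg_one]; simp; rw [show (1 + 1 : ℝ) * θ = 2 * θ by ring, Real.sin_two_mul]; ring
  | more k ih1 ih2 =>
    have h := congrArg (Polynomial.eval (Real.cos θ)) (geg_rec 1 k)
    simp at h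
    have hk : (k:ℝ) + 2 ≠ 0 := by positivity
    have h' : (geg 1 (k + 2)).eval (Real.cos θ) = 2 * Real.cos θ * (geg 1 (k + 1)).eval (Real.cos θ)
        - (geg 1 k).eval (Real.cos θ) := by
      apply mul_left_cancel₀ hk
      linear_combination h
    rw [h', mul_sub, ← ih1]
    push_cast at ih2 ⊢
    have : Real.sin θ * (2 * Real.cos θ * (geg 1 (k + 1)).eval (Real.cos θ)) =
      2 * Real.cos θ * Real.sin (((k:ℝ) + 1 + 1) * θ) := by rw [ih2]; ring
    rw [this, show ((k:ℝ) + 2 + 1) * θ = ((k:ℝ) + 1 + 1) * θ + θ by ring,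
      show ((k:ℝ) + 1) * θ = ((k:ℝ) + 1 + 1) * θ - θ by ring, Real.sin_add, Real.sin_sub]
    ring

lemma sin_rpow_int (q : ℝ) (hq : -1 < q) :
    IntervalIntegrable (fun θ => (Real.sin θ) ^ q) volume 0 π := by
  rcases le_or_gt 0 q with h | h
  · exact (Real.continuous_sin.rpow_const (fun x => Or.inr h)).intervalIntegrable _ _
  have hpi := Real.pi_pos
  have h1 : IntervalIntegrable (fun θ => (Real.sin θ) ^ q) volume 0 (π / 2) := by
    have hi : IntervalIntegrable (fun θ : ℝ => (2 / π) ^ q * θ ^ q) volume 0 (π / 2) :=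
      (intervalIntegral.intervalIntegrable_rpow' hq).const_mul _
    refine hi.mono_fun ?_ ?_
    · exact (Real.measurable_sin.pow_const q).aestronglyMeasurable
    · rw [uIoc_of_le (by positivity)]
      refine (ae_restrict_iff' measurableSet_Ioc).mpr (Filter.Eventually.of_forall ?_)
      intro θ hθ
      have h2 := Real.mul_le_sin hθ.1.le hθ.2
      have h3 : 0 < 2 / π * θ := mul_pos (by positivity) hθ.1
      show ‖Real.sin θ ^ q‖ ≤ ‖(2 / π) ^ q * θ ^ q‖
      rw [← Real.mul_rpow (by positivity) hθ.1.le, Real.norm_of_nonneg (Real.rpow_nonneg (h3.le.trans h2) _),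
        Real.norm_of_nonneg (Real.rpow_nonneg h3.le _)]
      exact Real.rpow_le_rpow_of_nonpos h3 h2 h.le
  refine h1.trans ?_
  have h2 := (h1.comp_sub_left π).symm
  simp only [Real.sin_pi_sub] at h2
  rw [sub_zero, show π - π / 2 = π / 2 by ring] at h2
  exact h2

lemma base_case (l : ℝ) (hl : 0 < l) (hl1 : l ≤ 1) (n : ℕ) (t : ℝ) (ht : t ∈ Set.Ioc 0 π) :
    0 < ∫ θ in (0:ℝ)..t, (t - θ) ^ 2 * ((geg l n).eval (Real.cos θ) * (Real.sin θ) ^ (2 * l)) := by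
  have hpi := Real.pi_pos
  set p := geg l n with hp
  set B : ℕ → ℝ := fun k => aa t k - aa t (k + 2) with hB
  have hBpos : ∀ k, 0 < B k := fun k => aa_pos t ht.1 k
  have hsum : HasSum (fun k => ∫ θ in (0:ℝ)..π, B k * ((geg 1 k * p).eval (Real.cos θ) * (Real.sin θ) ^ (2 * l)))
      (∫ θ in (0:ℝ)..π, π * ((max (t - θ) 0) ^ 2 * (p.eval (Real.cos θ) * (Real.sin θ) ^ (2 * l)))) := by
    have hcase : ∀ θ ∈ Set.Ioc 0 π, Real.sin θ ^ (2 * l) = Real.sin θ * Real.sin θ ^ (2 * l - 1) ∧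
        0 ≤ Real.sin θ := by
      intro θ hθ
      rcases hθ.2.lt_or_eq with h | h
      · have hs := Real.sin_pos_of_pos_of_lt_pi hθ.1 h
        refine ⟨?_, hs.le⟩
        rw [Real.rpow_sub_one hs.ne']; field_simp
      · rw [h]; simp [Real.zero_rpow (show 2 * l ≠ 0 by linarith), hl.ne']
    apply intervalIntegral.hasSum_integral_of_dominated_convergence
      (bound := fun k θ => B k * (|p.eval (Real.cos θ)| * Real.sin θ ^ (2 * l - 1)))
    · intro k
      exact ((Lam_cont l hl _).const_mul _).aestronglyMeasurable
    · intro k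
      refine Filter.Eventually.of_forall fun θ hθ => ?_
      rw [uIoc_of_le hpi.le] at hθ
      obtain ⟨h1, h2⟩ := hcase θ hθ
      have : B k * ((geg 1 k * p).eval (Real.cos θ) * (Real.sin θ) ^ (2 * l)) = 
        Real.sin ((k + 1) * θ) * (B k * (p.eval (Real.cos θ) * Real.sin θ ^ (2 * l - 1))) := by
        rw [h1, sin_geg, Polynomial.eval_mul]; ring
      rw [this, norm_mul, norm_mul, norm_mul, Real.norm_of_nonneg (hBpos k).le,
        Real.norm_of_nonneg (Real.rpow_nonneg h2 _)]
      exact mul_le_of_le_one_left (by have := Real.rpow_nonneg h2 (2 * l - 1); have := hBpos k; positivity) (Real.abs_sin_le_one _)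
    · refine Filter.Eventually.of_forall fun θ hθ => ?_
      exact (aad_summable t).mul_right _
    · simp only [tsum_mul_right]
      refine IntervalIntegrable.const_mul ?_ _
      refine (sin_rpow_int (2 * l - 1) (by linarith)).continuousOn_mul ?_
      exact ((p.continuous.comp Real.continuous_cos).abs).continuousOn
    · refine Filter.Eventually.of_forall fun θ hθ => ?_
      rw [uIoc_of_le hpi.le] at hθ
      obtain ⟨h1, h2⟩ := hcase θ hθ
      have h3 := (sin_sum t ht θ ⟨hθ.1.le, hθ.2⟩).mul_right (p.eval (Real.cos θ) * Real.sin θ ^ (2 * l - 1))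
      refine hs_congr h3 (fun k => ?_) ?_
      · beta_reduce
        rw [h1, sin_geg, Polynomial.eval_mul]; ring
      · rw [h1]; ring
  have hcont : Continuous (fun θ : ℝ => (max (t - θ) 0) ^ 2 * (p.eval (Real.cos θ) * (Real.sin θ) ^ (2 * l))) := by
    apply Continuous.mul
    · fun_prop
    · exact Lam_cont l hl p
  have heq : ∫ θ in (0:ℝ)..π, π * ((max (t - θ) 0) ^ 2 * (p.eval (Real.cos θ) * (Real.sin θ) ^ (2 * l)))
      = π * ∫ θ in (0:ℝ)..t, (t - θ) ^ 2 * (p.eval (Real.cos θ) * (Real.sin θ) ^ (2 * l)) := by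
    rw [intervalIntegral.integral_const_mul, ← intervalIntegral.integral_add_adjacent_intervals
      (hcont.intervalIntegrable 0 t) (hcont.intervalIntegrable t π)]
    congr 1
    have z : ∫ θ in t..π, (max (t - θ) 0) ^ 2 * (p.eval (Real.cos θ) * (Real.sin θ) ^ (2 * l)) = 0 := by
      apply intervalIntegral.integral_zero_ae
      refine Filter.Eventually.of_forall fun θ hθ => ?_
      rw [uIoc_of_le ht.2] at hθ
      rw [max_eq_right (by linarith [hθ.1])]; ring
    rw [z, add_zero]
    apply intervalIntegral.integral_congr
    intro θ hθ
    rw [uIcc_of_le ht.1.le] at hθ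
    simp only
    rw [max_eq_left (by linarith [hθ.2])]
  rw [heq] at hsum
  have hterm : ∀ k, ∫ θ in (0:ℝ)..π, B k * ((geg 1 k * p).eval (Real.cos θ) * (Real.sin θ) ^ (2 * l))
      = B k * Lam l (geg 1 k * p) := fun k => intervalIntegral.integral_const_mul _ _
  simp only [hterm] at hsum
  have hpos : 0 < B n * Lam l (geg 1 n * p) := mul_pos (hBpos n) (conn_pos l hl n)
  have hle := le_hasSum hsum n (fun j _ => mul_nonneg (hBpos j).le (conn_nonneg l hl hl1 n j).1)
  have := hpos.trans_le hle
  exact (pos_iff_pos_of_mul_pos this).mp hpi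


noncomputable def It : ℕ → (ℝ → ℝ) → ℝ → ℝ
  | 0, w => w
  | (k + 1), w => fun s => ∫ θ in (0:ℝ)..s, It k w θ

lemma It_deriv' (w : ℝ → ℝ) (hw : Continuous w) (s : ℝ) :
    HasDerivAt (fun s => ∫ θ in (0:ℝ)..s, w θ) (w s) s :=
  intervalIntegral.integral_hasDerivAt_right (hw.intervalIntegrable _ _)
    (hw.stronglyMeasurableAtFilter _ _) hw.continuousAt

lemma It_cont (w : ℝ → ℝ) (hw : Continuous w) (k : ℕ) : Continuous (It k w) := by
  induction k with
  | zero => exact hw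
  | succ k ih =>
    exact continuous_iff_continuousAt.mpr fun s => (It_deriv' _ ih s).continuousAt

lemma It_deriv (w : ℝ → ℝ) (hw : Continuous w) (k : ℕ) (s : ℝ) :
    HasDerivAt (It (k + 1) w) (It k w s) s := It_deriv' _ (It_cont w hw k) s

lemma It_zero (w : ℝ → ℝ) (k : ℕ) : It (k + 1) w 0 = 0 := by
  show ∫ θ in (0:ℝ)..0, It k w θ = 0
  simp

lemma It_shift (w : ℝ → ℝ) (k j : ℕ) : It k (It j w) = It (k + j) w := by
  induction k with
  | zero => rw [zero_add]; rfl
  | succ k ih =>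
    rw [show k + 1 + j = (k + j) + 1 by omega]
    funext s
    show ∫ θ in (0:ℝ)..s, It k (It j w) θ = ∫ θ in (0:ℝ)..s, It (k + j) w θ
    rw [ih]

lemma It_congr (w v : ℝ → ℝ) (h : ∀ s ∈ Set.Icc 0 π, w s = v s) (k : ℕ) :
    ∀ s ∈ Set.Icc 0 π, It k w s = It k v s := by
  induction k with
  | zero => exact h
  | succ k ih =>
    intro s hs
    apply intervalIntegral.integral_congr
    intro θ hθ
    rw [uIcc_of_le hs.1] at hθ
    exact ih θ ⟨hθ.1, hθ.2.trans hs.2⟩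

lemma It_lin (w v : ℝ → ℝ) (hw : Continuous w) (hv : Continuous v) (a : ℝ) (k : ℕ) (s : ℝ) :
    It k (fun s => w s + a * v s) s = It k w s + a * It k v s := by
  induction k generalizing s with
  | zero => rfl
  | succ k ih =>
    show ∫ θ in (0:ℝ)..s, It k (fun s => w s + a * v s) θ = _
    simp only [ih]
    rw [intervalIntegral.integral_add ((It_cont w hw k).intervalIntegrable _ _)
      (((It_cont v hv k).const_mul a).intervalIntegrable _ _), intervalIntegral.integral_const_mul]
    rfl

lemma It_smul (v : ℝ → ℝ) (a : ℝ) (k : ℕ) (s : ℝ) :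
    It k (fun s => a * v s) s = a * It k v s := by
  induction k generalizing s with
  | zero => rfl
  | succ k ih =>
    show ∫ θ in (0:ℝ)..s, It k (fun s => a * v s) θ = _
    simp only [ih]
    rw [intervalIntegral.integral_const_mul]
    rfl

lemma It_ftc (w w1 : ℝ → ℝ) (h : ∀ s, HasDerivAt w (w1 s) s) (hc : Continuous w1) (h0 : w 0 = 0) :
    It 1 w1 = w := by
  funext s
  show ∫ θ in (0:ℝ)..s, w1 θ = w s
  rw [intervalIntegral.integral_eq_sub_of_hasDerivAt (fun x _ => h x) (hc.intervalIntegrable _ _), h0,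
    sub_zero]

lemma It_pow (k : ℕ) : ∀ (w : ℝ → ℝ), Continuous w → ∀ t : ℝ,
    ∫ θ in (0:ℝ)..t, (t - θ) ^ k * w θ = k.factorial * It (k + 1) w t := by
  induction k with
  | zero => intro w hw t; simp [It]
  | succ k ih =>
    intro w hw t
    have hu : ∀ x : ℝ, HasDerivAt (fun θ : ℝ => (t - θ) ^ (k + 1)) (-((k + 1 : ℝ) * (t - x) ^ k)) x := by
      intro x
      have := ((hasDerivAt_id x).const_sub t).pow (k + 1)
      refine this.congr_deriv ?_
      simp
    show ∫ θ in (0:ℝ)..t, (t - θ) ^ (k + 1) * It 0 w θ = _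
    rw [intervalIntegral.integral_mul_deriv_eq_deriv_mul (fun x _ => hu x)
      (fun x _ => It_deriv w hw 0 x) (Continuous.intervalIntegrable (by fun_prop) _ _)
      (hw.intervalIntegrable _ _), It_zero]
    have := ih (It 1 w) (It_cont w hw 1) t
    rw [It_shift] at this
    have e : ∀ x, -((k + 1 : ℝ) * (t - x) ^ k) * It (0 + 1) w x = (-(k + 1 : ℝ)) * ((t - x) ^ k * It 1 w x) := by
      intro x; simp only [zero_add]; ring
    simp only [e]
    rw [intervalIntegral.integral_const_mul, this, Nat.factorial_succ]
    push_cast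
    simp
    ring

noncomputable def ww (l : ℝ) (n : ℕ) (θ : ℝ) : ℝ := (geg l n).eval (Real.cos θ) * (Real.sin θ) ^ (2 * l)

lemma ww_ode (l : ℝ) (hl : 0 < l) (n : ℕ) : ∃ w1 w2 : ℝ → ℝ,
    (∀ s, HasDerivAt (ww (l + 1) n) (w1 s) s) ∧ (∀ s, HasDerivAt w1 (w2 s) s) ∧ Continuous w2 ∧
    ww (l + 1) n 0 = 0 ∧ w1 0 = 0 ∧
    ∃ c : ℝ, 0 < c ∧ ∀ s ∈ Set.Icc 0 π, w2 s + (n + 2 * (l + 1)) ^ 2 * ww (l + 1) n s = c * ww l n s := by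
  set p := geg (l + 1) n with hp
  have hd : ∀ (q : Polynomial ℝ) (s : ℝ), HasDerivAt (fun s => q.eval (Real.cos s))
      (q.derivative.eval (Real.cos s) * (-Real.sin s)) s := fun q s =>
    (q.hasDerivAt (Real.cos s)).comp s (Real.hasDerivAt_cos s)
  have hr : ∀ (a : ℝ) (ha : 1 ≤ a) (s : ℝ), HasDerivAt (fun s => Real.sin s ^ a)
      (Real.cos s * a * Real.sin s ^ (a - 1)) s := fun a ha s =>
    (Real.hasDerivAt_sin s).rpow_const (Or.inr ha)
  have ha1 : 1 ≤ 2 * (l + 1) := by linarith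
  have ha2 : 1 ≤ 2 * (l + 1) - 1 := by linarith
  refine ⟨fun s => p.derivative.eval (Real.cos s) * (-Real.sin s) * Real.sin s ^ (2 * (l + 1)) +
    p.eval (Real.cos s) * (Real.cos s * (2 * (l + 1)) * Real.sin s ^ (2 * (l + 1) - 1)),
    fun s => ((p.derivative.derivative.eval (Real.cos s) * (-Real.sin s)) * (-Real.sin s) +
      p.derivative.eval (Real.cos s) * (-Real.cos s)) * Real.sin s ^ (2 * (l + 1)) +
      p.derivative.eval (Real.cos s) * (-Real.sin s) * (Real.cos s * (2 * (l + 1)) * Real.sin s ^ (2 * (l + 1) - 1)) +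
      (p.derivative.eval (Real.cos s) * (-Real.sin s) * (Real.cos s * (2 * (l + 1)) * Real.sin s ^ (2 * (l + 1) - 1)) +
      p.eval (Real.cos s) * ((-Real.sin s) * (2 * (l + 1)) * Real.sin s ^ (2 * (l + 1) - 1) +
        Real.cos s * (2 * (l + 1)) * (Real.cos s * (2 * (l + 1) - 1) * Real.sin s ^ (2 * (l + 1) - 1 - 1)))),
    ?_, ?_, ?_, ?_, ?_, 2 * (l + 1) * (n + 2 * l + 1) * (n + 2 * l) / (2 * l), ?_, ?_⟩
  · intro s
    exact (hd p s).mul (hr _ ha1 s)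
  · intro s
    exact (((hd p.derivative s).mul (Real.hasDerivAt_sin s).neg).mul (hr _ ha1 s)).add
      ((hd p s).mul (((Real.hasDerivAt_cos s).mul_const _).mul (hr _ ha2 s)))
  · have c1 : ∀ q : Polynomial ℝ, Continuous (fun s => q.eval (Real.cos s)) := fun q =>
      q.continuous.comp Real.continuous_cos
    have c2 : ∀ a : ℝ, 0 ≤ a → Continuous (fun s => Real.sin s ^ a) := fun a ha =>
      Real.continuous_sin.rpow_const (fun _ => Or.inr ha)
    have d1 := c1 p
    have d2 := c1 p.derivative
    have d3 := c1 p.derivative.derivative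
    have d4 := c2 (2 * (l + 1)) (by linarith)
    have d5 := c2 (2 * (l + 1) - 1) (by linarith)
    have d6 := c2 (2 * (l + 1) - 1 - 1) (by linarith)
    have d7 := Real.continuous_cos
    have d8 := Real.continuous_sin
    clear_value p
    generalize (2 * (l + 1)) = a at *
    fun_prop
  · unfold ww
    rw [Real.sin_zero, Real.zero_rpow (by linarith), mul_zero]
  · beta_reduce
    rw [Real.sin_zero, Real.zero_rpow (by linarith), Real.zero_rpow (by linarith)]; ring
  · positivity
  · intro s hs
    have h0 : 0 ≤ Real.sin s := Real.sin_nonneg_of_mem_Icc hs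
    have e0 : Real.sin s ^ (2 * (l + 1) - 1 - 1) = Real.sin s ^ (2 * l) := by congr 1; ring
    have e1 : Real.sin s ^ (2 * (l + 1) - 1) = Real.sin s ^ (2 * l) * Real.sin s := by
      rw [show 2 * (l + 1) - 1 = 2 * l + 1 by ring, Real.rpow_add_one' h0 (by linarith)]
    have e2 : Real.sin s ^ (2 * (l + 1)) = Real.sin s ^ (2 * l) * Real.sin s * Real.sin s := by
      rw [show 2 * (l + 1) = 2 * l + 1 + 1 by ring, Real.rpow_add_one' h0 (by linarith),
        Real.rpow_add_one' h0 (by linarith)]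
    unfold ww
    beta_reduce
    rw [e0, e1, e2, ← hp]
    have hs2 : Real.sin s ^ 2 = 1 - Real.cos s ^ 2 := Real.sin_sq s
    have o1 := congrArg (Polynomial.eval (Real.cos s)) (geg_ode (l + 1) n)
    have o2 := geg_ode l (n + 1)
    have o3 := geg_d1 l n
    rw [geg_deriv, ← hp] at o2 o3
    replace o2 := congrArg (Polynomial.eval (Real.cos s)) o2
    replace o3 := congrArg (Polynomial.eval (Real.cos s)) o3
    simp [← hp] at o1 o2 o3
    set x := Real.cos s
    set σ := Real.sin s
    set P0 := p.eval x
    set P1 := p.derivative.eval x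
    set P2 := p.derivative.derivative.eval x
    set G := (geg l (n + 1)).eval x
    set g := (geg l n).eval x
    have key : 2 * l * (P2 * σ ^ 4 - P1 * x * σ ^ 2 - 4 * (l + 1) * P1 * x * σ ^ 2 + P0 * (- 2 * (l + 1) * σ ^ 2 + 
      2 * (l + 1) * (2 * (l + 1) - 1) * x ^ 2) + (n + 2 * (l + 1)) ^ 2 * P0 * σ ^ 2) =
      2 * (l + 1) * (n + 2 * l + 1) * (n + 2 * l) * g := by
      rw [show σ ^ 4 = (1 - x ^ 2) ^ 2 by rw [← hs2]; ring, hs2]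
      linear_combination 2 * l * (1 - x ^ 2) * o1 - 2 * (l + 1) * x * o2 + 2 * (l + 1) * (n + 2 * l + 1) * o3
    have hl2 : (2 * l) ≠ 0 := by positivity
    rw [div_mul_eq_mul_div, eq_div_iff hl2]
    linear_combination σ ^ (2 * l) * key

lemma ww_cont (l : ℝ) (hl : 0 < l) (n : ℕ) : Continuous (ww l n) := Lam_cont l hl _

lemma It_pos (j : ℕ) : ∀ l : ℝ, (j:ℝ) < l → l ≤ j + 1 → ∀ n : ℕ, ∀ t ∈ Set.Ioc 0 π,
    0 < It (j + 3) (ww l n) t := by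
  induction j with
  | zero =>
    intro l hl hl1 n t ht
    simp at hl hl1
    have h := base_case l hl hl1 n t ht
    have h2 := It_pow 2 (ww l n) (ww_cont l hl n) t
    unfold ww at h2
    rw [h2] at h
    exact pos_of_mul_pos_right h (by positivity)
  | succ j ih =>
    intro l hl hl1 n t ht
    push_cast at hl hl1
    obtain ⟨ν, rfl⟩ : ∃ ν, l = ν + 1 := ⟨l - 1, by ring⟩
    have hj : (0:ℝ) ≤ j := Nat.cast_nonneg j
    have hν : 0 < ν := by linarith
    obtain ⟨w1, w2, d1, d2, c2, z0, z1, c, hc, hode⟩ := ww_ode ν hν n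
    have cw := ww_cont (ν + 1) (by linarith) n
    have c1 : Continuous w1 := continuous_iff_continuousAt.mpr fun s => (d2 s).continuousAt
    have hW : It 2 w2 = ww (ν + 1) n := by
      rw [show (2:ℕ) = 1 + 1 from rfl, ← It_shift, It_ftc w1 w2 d2 c2 z1, It_ftc _ w1 d1 c1 z0]
    have hg : ∀ s ∈ Set.Icc 0 π, It (j + 1) (ww (ν + 1) n) s + (n + 2 * (ν + 1)) ^ 2 * It (j + 3) (ww (ν + 1) n) s
        = c * It (j + 3) (ww ν n) s := by
      intro s hs
      rw [← It_smul (ww ν n), ← It_congr _ _ hode (j + 3) s hs, It_lin _ _ c2 cw, show j + 3 = (j + 1) + 2 by omega,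
        ← It_shift w2, hW]
    have hp : ∀ s ∈ Set.Ioc 0 π, 0 < It (j + 1) (ww (ν + 1) n) s + (n + 2 * (ν + 1)) ^ 2 * It (j + 3) (ww (ν + 1) n) s := by
      intro s hs
      rw [hg s ⟨hs.1.le, hs.2⟩]
      exact mul_pos hc (ih ν (by linarith) (by linarith) n s hs)
    refine pos_lemma (n + 2 * (ν + 1)) t (by positivity) ht.1 (It (j + 1 + 3) (ww (ν + 1) n)) (It (j + 3) (ww (ν + 1) n))
      (It (j + 2) (ww (ν + 1) n)) (It (j + 1) (ww (ν + 1) n)) (It_deriv _ cw _) (It_deriv _ cw _) (It_deriv _ cw _)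
      (It_cont _ cw _) (It_zero _ _) (It_zero _ _) (It_zero _ _) ?_ t ht.1 ?_
    · intro s hs
      rcases hs.1.eq_or_lt with h | h
      · rw [← h, It_zero, It_zero]; simp
      · exact (hp s ⟨h, hs.2.trans ht.2⟩).le
    · intro s hs _
      exact hp s ⟨hs.1, hs.2.le.trans ht.2⟩


lemma beta_scale (a : ℕ) (b : ℝ) (θ t : ℝ) (h : θ < t) :
    ∫ s in θ..t, (s - θ) ^ a * (t - s) ^ b =
      (t - θ) ^ (a + b + 1) * ∫ u in (0:ℝ)..1, u ^ a * (1 - u) ^ b := by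
  have hT : 0 < t - θ := by linarith
  have h1 := intervalIntegral.integral_comp_mul_add (a := 0) (b := 1)
    (fun s => (s - θ) ^ a * (t - s) ^ b) hT.ne' θ
  rw [mul_zero, zero_add, mul_one, sub_add_cancel, smul_eq_mul] at h1
  have h2 : ∫ x in (0:ℝ)..1, ((t - θ) * x + θ - θ) ^ a * (t - ((t - θ) * x + θ)) ^ b
      = ∫ x in (0:ℝ)..1, ((t - θ) ^ (a + b)) * (x ^ a * (1 - x) ^ b) := by
    apply intervalIntegral.integral_congr
    intro x hx
    rw [uIcc_of_le zero_le_one] at hx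
    beta_reduce
    rw [show (t - θ) * x + θ - θ = (t - θ) * x by ring,
      show t - ((t - θ) * x + θ) = (t - θ) * (1 - x) by ring,
      Real.mul_rpow hT.le (by linarith [hx.2]), mul_pow, Real.rpow_add hT, Real.rpow_natCast]
    ring
  rw [h2, intervalIntegral.integral_const_mul] at h1
  rw [Real.rpow_add_one hT.ne']
  field_simp at h1
  linarith

lemma superpos (W : ℝ → ℝ) (hW : Continuous W) (a : ℕ) (δ : ℝ) (hδ : (a:ℝ) < δ) (t : ℝ) (ht : 0 < t)
    (hF : ∀ s ∈ Set.Ioc 0 t, 0 < ∫ θ in (0:ℝ)..s, (s - θ) ^ (a + 1) * W θ) (hδ' : (a:ℝ) + 1 < δ) :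
    0 < ∫ θ in (0:ℝ)..t, (t - θ) ^ δ * W θ := by
  set b : ℝ := δ - (a + 1 : ℕ) - 1 with hb
  have hb1 : -1 < b := by rw [hb]; push_cast; linarith
  have hint : IntervalIntegrable (fun s : ℝ => (t - s) ^ b) volume 0 t := by
    have := ((intervalIntegral.intervalIntegrable_rpow' hb1 (a := 0) (b := t)).comp_sub_left t).symm
    simpa using this
  have hI : IntegrableOn (Function.uncurry (fun θ s : ℝ => ((max (s - θ) 0) ^ (a + 1) * W θ) * (t - s) ^ b))
      (uIoc 0 t ×ˢ uIoc 0 t) := by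
    have hK : IsCompact (Set.Icc 0 t ×ˢ Set.Icc 0 t : Set (ℝ × ℝ)) := isCompact_Icc.prod isCompact_Icc
    have h1 : IntegrableOn (fun z : ℝ × ℝ => (t - z.2) ^ b) (Set.Icc 0 t ×ˢ Set.Icc 0 t) := by
      rw [IntegrableOn, Measure.volume_eq_prod, ← Measure.prod_restrict]
      have h2 : Integrable (fun s : ℝ => (t - s) ^ b) (volume.restrict (Set.Icc 0 t)) := by
        have := (intervalIntegrable_iff_integrableOn_Icc_of_le ht.le).mp hint
        exact this
      exact h2.comp_snd _
    have h3 : ContinuousOn (fun z : ℝ × ℝ => (max (z.2 - z.1) 0) ^ (a + 1) * W z.1)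
      (Set.Icc 0 t ×ˢ Set.Icc 0 t) := by
      apply Continuous.continuousOn
      fun_prop
    have h4 := h1.continuousOn_mul h3 hK
    rw [uIoc_of_le ht.le]
    exact h4.mono_set (Set.prod_mono Ioc_subset_Icc_self Ioc_subset_Icc_self)
  have hsw := intervalIntegral_intervalIntegral_swap hI
  have hcut : ∀ s ∈ Set.Ioc 0 t, ∫ θ in (0:ℝ)..t, (max (s - θ) 0) ^ (a + 1) * W θ * (t - s) ^ b
      = (∫ θ in (0:ℝ)..s, (s - θ) ^ (a + 1) * W θ) * (t - s) ^ b := by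
    intro s hs
    rw [intervalIntegral.integral_mul_const]
    congr 1
    have hc : Continuous (fun θ : ℝ => (max (s - θ) 0) ^ (a + 1) * W θ) := by fun_prop
    rw [← intervalIntegral.integral_add_adjacent_intervals (hc.intervalIntegrable 0 s) (hc.intervalIntegrable s t)]
    have z : ∫ θ in s..t, (max (s - θ) 0) ^ (a + 1) * W θ = 0 := by
      apply intervalIntegral.integral_zero_ae
      refine Filter.Eventually.of_forall fun θ hθ => ?_
      rw [uIoc_of_le hs.2] at hθ
      rw [max_eq_right (by linarith [hθ.1]), zero_pow (by omega), zero_mul]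
    rw [z, add_zero]
    apply intervalIntegral.integral_congr
    intro θ hθ
    rw [uIcc_of_le hs.1.le] at hθ
    beta_reduce
    rw [max_eq_left (by linarith [hθ.2])]
  have hcut2 : ∀ θ ∈ Set.Ioo 0 t, ∫ s in (0:ℝ)..t, (max (s - θ) 0) ^ (a + 1) * W θ * (t - s) ^ b
      = (∫ u in (0:ℝ)..1, u ^ (a + 1) * (1 - u) ^ b) * ((t - θ) ^ δ * W θ) := by
    intro θ hθ
    have hc : IntervalIntegrable (fun s : ℝ => (max (s - θ) 0) ^ (a + 1) * W θ * (t - s) ^ b) volume 0 t := by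
      refine hint.continuousOn_mul ?_
      apply Continuous.continuousOn
      fun_prop
    have hm : θ ∈ Set.uIcc 0 t := by rw [uIcc_of_le ht.le]; exact ⟨hθ.1.le, hθ.2.le⟩
    rw [← intervalIntegral.integral_add_adjacent_intervals
      (hc.mono_set (Set.uIcc_subset_uIcc_left hm)) (hc.mono_set (Set.uIcc_subset_uIcc_right hm))]
    have z : ∫ s in (0:ℝ)..θ, (max (s - θ) 0) ^ (a + 1) * W θ * (t - s) ^ b = 0 := by
      apply intervalIntegral.integral_zero_ae
      refine Filter.Eventually.of_forall fun s hs => ?_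
      rw [uIoc_of_le hθ.1.le] at hs
      rw [max_eq_right (by linarith [hs.2]), zero_pow (by omega), zero_mul, zero_mul]
    rw [z, zero_add]
    have e : ∫ s in θ..t, (max (s - θ) 0) ^ (a + 1) * W θ * (t - s) ^ b
      = ∫ s in θ..t, W θ * ((s - θ) ^ (a + 1) * (t - s) ^ b) := by
      apply intervalIntegral.integral_congr
      intro s hs
      rw [uIcc_of_le hθ.2.le] at hs
      beta_reduce
      rw [max_eq_left (by linarith [hs.1])]; ring
    rw [e, intervalIntegral.integral_const_mul, beta_scale _ _ _ _ hθ.2]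
    rw [show ((a + 1 : ℕ) : ℝ) + b + 1 = δ by rw [hb]; ring]
    ring
  have hL : ∫ θ in (0:ℝ)..t, ∫ s in (0:ℝ)..t, (max (s - θ) 0) ^ (a + 1) * W θ * (t - s) ^ b
      = (∫ u in (0:ℝ)..1, u ^ (a + 1) * (1 - u) ^ b) * ∫ θ in (0:ℝ)..t, (t - θ) ^ δ * W θ := by
    rw [← intervalIntegral.integral_const_mul]
    rw [intervalIntegral.integral_of_le ht.le, intervalIntegral.integral_of_le ht.le,
      integral_Ioc_eq_integral_Ioo, integral_Ioc_eq_integral_Ioo]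
    exact setIntegral_congr_fun measurableSet_Ioo hcut2
  have hR : ∫ s in (0:ℝ)..t, ∫ θ in (0:ℝ)..t, (max (s - θ) 0) ^ (a + 1) * W θ * (t - s) ^ b
      = ∫ s in (0:ℝ)..t, (∫ θ in (0:ℝ)..s, (s - θ) ^ (a + 1) * W θ) * (t - s) ^ b := by
    rw [intervalIntegral.integral_of_le ht.le, intervalIntegral.integral_of_le ht.le]
    exact setIntegral_congr_fun measurableSet_Ioc hcut
  have hpos : 0 < ∫ s in (0:ℝ)..t, (∫ θ in (0:ℝ)..s, (s - θ) ^ (a + 1) * W θ) * (t - s) ^ b := by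
    apply intervalIntegral.intervalIntegral_pos_of_pos_on _ _ ht
    · refine hint.continuousOn_mul ?_
      apply Continuous.continuousOn
      simp only [It_pow (a + 1) W hW]
      exact (It_cont W hW _).const_mul _
    · intro s hs
      exact mul_pos (hF s ⟨hs.1, hs.2.le⟩) (Real.rpow_pos_of_pos (by linarith [hs.2]) _)
  rw [← hR, ← hsw, hL] at hpos
  refine pos_of_mul_pos_right hpos ?_
  apply intervalIntegral.integral_nonneg zero_le_one
  intro u hu
  exact mul_nonneg (pow_nonneg hu.1 _) (Real.rpow_nonneg (by linarith [hu.2]) _)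

theorem FG_pos_of_real_lambda (lam : ℝ) (hlam : 0 < lam) (δ : ℝ)
    (hδ : ((⌈lam⌉ : ℤ) : ℝ) + 1 ≤ δ) (n : ℕ) (t : ℝ) (ht : t ∈ Set.Ioc (0:ℝ) π) :
    0 < FG n lam δ t := by
  obtain ⟨j, hj⟩ : ∃ j : ℕ, ⌈lam⌉ = (j:ℤ) + 1 := by
    have : 0 < ⌈lam⌉ := Int.ceil_pos.mpr hlam
    exact ⟨(⌈lam⌉ - 1).toNat, by omega⟩
  have h1 : (j:ℝ) < lam := by
    have := Int.ceil_lt_add_one lam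
    rw [hj] at this; push_cast at this; linarith
  have h2 : lam ≤ j + 1 := by
    have := Int.le_ceil lam
    rw [hj] at this; push_cast at this; exact this
  rw [hj] at hδ
  push_cast at hδ
  have hcw := ww_cont lam hlam n
  have hF : ∀ s ∈ Set.Ioc 0 π, 0 < ∫ θ in (0:ℝ)..s, (s - θ) ^ (j + 2) * ww lam n θ := by
    intro s hs
    rw [It_pow _ _ hcw]
    exact mul_pos (by positivity) (It_pos j lam h1 h2 n s hs)
  have e : FG n lam δ t = ∫ θ in (0:ℝ)..t, (t - θ) ^ δ * ww lam n θ := by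
    unfold FG ww
    rw [gegenbauer_eq n lam hlam]
    simp only [mul_assoc]
  rw [e]
  rcases hδ.eq_or_lt with h | h
  · have := hF t ht
    rw [← h, show (j:ℝ) + 1 + 1 = ((j + 2 : ℕ) : ℝ) by push_cast; ring]
    simp only [Real.rpow_natCast]
    exact this
  · refine superpos _ hcw (j + 1) δ (by push_cast; linarith) t ht.1 (fun s hs => hF s ⟨hs.1, hs.2.trans ht.2⟩)
      (by push_cast; linarith)
end

section
/- Let α > 0 be real, let β ∈ ℕ (a nonnegative integer), and let δ be a real number with δ ≥ ⌈α⌉ + 2. Then F_n^{(α,β),δ}(t) > F_n^{(α,β+1),δ}(t) for all t ∈ (0, π] and all n ∈ ℕ (n ≥ 0). -/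
open MeasureTheory Real Set

theorem rc_succ (r : ℝ) (k : ℕ) : Ring.choose r (k+1) = (r - k) / (k+1) * Ring.choose r k := by
  rw [Ring.choose_eq_smul, Ring.choose_eq_smul, descPochhammer_succ_right, Nat.factorial_succ,
    Polynomial.smeval_mul, Polynomial.smeval_sub, Polynomial.smeval_X, Polynomial.smeval_natCast]
  have : (k.factorial : ℝ) ≠ 0 := by positivity
  simp only [smul_eq_mul, pow_one, pow_zero, nsmul_eq_mul, mul_one]
  push_cast
  field_simp

theorem rc_succ_succ (r : ℝ) (k : ℕ) :
    Ring.choose (r+1) (k+1) = Ring.choose r k + Ring.choose r (k+1) := Ring.choose_succ_succ r k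

theorem genBinom_eq (u : ℝ) (k : ℕ) (h : 0 < u - k + 1) : genBinom u k = Ring.choose u k := by
  induction k with
  | zero =>
    have : Real.Gamma (u+1) ≠ 0 := (Real.Gamma_pos_of_pos (by simpa using h)).ne'
    simp [genBinom, Ring.choose_zero_right, this]
  | succ k ih =>
    have h1 : 0 < u - k := by push_cast at h; linarith
    have ih' := ih (by linarith)
    rw [rc_succ, ← ih']
    unfold genBinom
    have e1 : u - ((k+1 : ℕ):ℝ) + 1 = u - k := by push_cast; ring
    rw [e1, Real.Gamma_add_one h1.ne']
    have e2 : Real.Gamma (((k+1:ℕ):ℝ) + 1) = (k+1) * Real.Gamma ((k:ℝ)+1) := by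
      rw [Real.Gamma_add_one (by positivity)]; push_cast; rfl
    rw [e2]
    have := (Real.Gamma_pos_of_pos h1).ne'
    have := (Real.Gamma_pos_of_pos (by positivity : (0:ℝ) < k+1)).ne'
    field_simp

theorem jac_hyp (n : ℕ) (a b x : ℝ) (ha : -1 < a) (hb : -1 < b) :
    jacobiP n a b x = ∑ j ∈ Finset.range (n+1),
      Ring.choose ((n:ℝ)+a) (n-j) * Ring.choose ((n:ℝ)+a+b+j) j * ((x-1)/2)^j := by
  have hx : (x+1)/2 = (x-1)/2 + 1 := by ring
  unfold jacobiP
  rw [hx]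
  set X := (x-1)/2
  have h1 : ∀ k ∈ Finset.range (n+1), genBinom ((n : ℝ) + a) ((n : ℝ) - (k : ℝ)) * genBinom ((n : ℝ) + b) (k : ℝ) *
      X ^ k * (X+1) ^ (n - k) = ∑ i ∈ Finset.range (n + 1 - k),
        Ring.choose ((n:ℝ)+a) (n-k) * Ring.choose ((n:ℝ)+b) k * X^(k+i) * ((n-k).choose i : ℝ) := by
    intro k hk
    have hk' : k ≤ n := by simpa [Nat.lt_succ_iff] using hk
    have hk2 : (k:ℝ) ≤ n := by exact_mod_cast hk'
    rw [← Nat.cast_sub hk', genBinom_eq _ _ (by rw [Nat.cast_sub hk']; have := k.cast_nonneg (α := ℝ); linarith), genBinom_eq _ _ (by linarith),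
      add_pow, Finset.mul_sum, Nat.succ_sub hk']
    refine Finset.sum_congr rfl fun i _ => ?_
    simp only [one_pow, pow_add]; ring
  rw [Finset.sum_congr rfl h1, ← Finset.sum_range_diag_flip (n+1) (fun k i => Ring.choose ((n:ℝ)+a) (n-k) * Ring.choose ((n:ℝ)+b) k * X^(k+i) * ((n-k).choose i : ℝ))]
  refine Finset.sum_congr rfl fun j hj => ?_
  have hj' : j ≤ n := by simpa [Nat.lt_succ_iff] using hj
  have hv : Ring.choose ((n:ℝ)+a+b+j) j = ∑ k ∈ Finset.range (j+1), Ring.choose ((n:ℝ)+b) k * Ring.choose (a+j) (j-k) := by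
    have := Ring.add_choose_eq (R := ℝ) (r := (n:ℝ)+b) (s := a + j) j (Commute.all _ _)
    rw [Finset.Nat.sum_antidiagonal_eq_sum_range_succ_mk] at this
    rw [← this]; congr 1; ring
  rw [hv, Finset.mul_sum, Finset.sum_mul]
  refine Finset.sum_congr rfl fun k hk => ?_
  have hk' : k ≤ j := by simpa [Nat.lt_succ_iff] using hk
  have := Ring.choose_smul_choose ((n:ℝ)+a) (n := n-k) (k := n-j) (by omega)
  have e : (n:ℝ) + a - ((n-j : ℕ):ℝ) = a + j := by rw [Nat.cast_sub hj']; ring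
  rw [e, show n - k - (n-j) = j - k by omega, nsmul_eq_mul, ← Nat.choose_symm (by omega : n-j ≤ n-k), show n - k - (n-j) = j - k by omega] at this
  rw [show k + (j-k) = j by omega]
  linear_combination (Ring.choose ((n:ℝ)+b) k * X^j) * this

theorem jac_one (n : ℕ) (a b x : ℝ) (ha : -1 < a) (hb : -1 < b) :
    jacobiP n a b x = (1-x)/2 * jacobiP n (a+1) b x + (1+x)/2 * jacobiP n a (b+1) x := by
  rw [jac_hyp n a b x ha hb, jac_hyp n (a+1) b x (by linarith) hb, jac_hyp n a (b+1) x ha (by linarith)]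
  rw [show (1-x)/2 = -((x-1)/2) by ring, show (1+x)/2 = (x-1)/2+1 by ring]
  set X := (x-1)/2
  have hL : ∀ f : ℕ → ℝ, X * ∑ j ∈ Finset.range (n+1), f j * X^j = ∑ j ∈ Finset.range n, f j * X^(j+1) + f n * X^(n+1) := by
    intro f
    rw [Finset.sum_range_succ, mul_add, Finset.mul_sum]
    congr 1
    · exact Finset.sum_congr rfl fun _ _ => by ring
    · ring
  rw [add_mul, one_mul, neg_mul, hL, hL]
  simp only [Finset.sum_range_succ']
  have hn : Ring.choose ((n:ℝ) + (a+1) + b + n) n = Ring.choose ((n:ℝ) + a + (b+1) + n) n := by congr 1; ring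
  simp only [Nat.sub_self, Ring.choose_zero_right, hn, one_mul, Nat.sub_zero]
  have : ∀ A B C D E : ℝ, A = -B + C + D → A + E = -(B + Ring.choose ((n:ℝ) + a + (b+1) + n) n * X^(n+1)) + (C + Ring.choose ((n:ℝ) + a + (b+1) + n) n * X^(n+1) + (D + E)) := by
    intros; linarith
  simp only [pow_zero, mul_one]
  apply this
  rw [← Finset.sum_neg_distrib, ← Finset.sum_add_distrib, ← Finset.sum_add_distrib]
  refine Finset.sum_congr rfl fun j hj => ?_
  have hj' : j < n := by simpa using hj
  obtain ⟨d, rfl⟩ : ∃ d, n = j + 1 + d := ⟨n - (j+1), by omega⟩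
  rw [show j + 1 + d - j = d + 1 by omega, show j + 1 + d - (j+1) = d by omega]
  push_cast
  set N : ℝ := (j:ℝ) + 1 + d
  have p1 := rc_succ_succ (N + a) d
  have p2 := rc_succ_succ (N+a+b+(j+1)) j
  rw [show N + (a+1) = N + a + 1 by ring, p1, show N + a + (b+1) + (j+1) = N+a+b+(j+1) + 1 by ring, p2,
    show N + a + 1 + b + j = N+a+b+(j+1) by ring,show N + a + (b + 1) + j = N+a+b+(j+1) by ring]
  ring

theorem jac_two (n : ℕ) (a b x : ℝ) (ha : -1 < a) (hb : -1 < b) :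
    (2*n+a+b+2) * ((1+x)/2) * jacobiP n a (b+1) x = (n+1) * jacobiP (n+1) a b x + (n+b+1) * jacobiP n a b x := by
  rw [jac_hyp n a b x ha hb, jac_hyp (n+1) a b x ha hb, jac_hyp n a (b+1) x ha (by linarith)]
  rw [show (1+x)/2 = (x-1)/2+1 by ring]
  set X := (x-1)/2
  have hL : ∀ f : ℕ → ℝ, X * ∑ j ∈ Finset.range (n+1), f j * X^j = ∑ j ∈ Finset.range n, f j * X^(j+1) + f n * X^(n+1) := by
    intro f
    rw [Finset.sum_range_succ, mul_add, Finset.mul_sum]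
    congr 1
    · exact Finset.sum_congr rfl fun _ _ => by ring
    · ring
  rw [mul_assoc, add_mul X 1, one_mul, hL, Finset.sum_range_succ _ (n+1)]
  simp only [Finset.sum_range_succ' _ n]
  simp only [Nat.sub_self, Ring.choose_zero_right, one_mul, Nat.sub_zero, pow_zero, mul_one]
  have t0 : (2*n+a+b+2) * Ring.choose ((n:ℝ)+a) n = (n+1) * Ring.choose (((n+1:ℕ):ℝ)+a) (n+1) + (n+b+1) * Ring.choose ((n:ℝ)+a) n := by
    have := rc_succ_succ ((n:ℝ)+a) n
    rw [show (((n+1:ℕ):ℝ)+a) = (n:ℝ)+a+1 by push_cast; ring, this, rc_succ]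
    field_simp; ring
  have t1 : (2*n+a+b+2) * Ring.choose ((n:ℝ)+a+(b+1)+n) n = (n+1) * Ring.choose (((n+1:ℕ):ℝ)+a+b+((n+1:ℕ):ℝ)) (n+1) := by
    rw [show (((n+1:ℕ):ℝ)+a+b+((n+1:ℕ):ℝ)) = (n:ℝ)+a+(b+1)+n+1 by push_cast; ring, rc_succ_succ, rc_succ]
    field_simp; ring
  have tj : (2*n+a+b+2) * (∑ j ∈ Finset.range n, Ring.choose ((n:ℝ)+a) (n-j) * Ring.choose ((n:ℝ)+a+(b+1)+j) j * X^(j+1)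
     + ∑ j ∈ Finset.range n, Ring.choose ((n:ℝ)+a) (n-(j+1)) * Ring.choose ((n:ℝ)+a+(b+1)+((j+1:ℕ):ℝ)) (j+1) * X^(j+1))
     = (n+1) * ∑ j ∈ Finset.range n, Ring.choose (((n+1:ℕ):ℝ)+a) (n+1-(j+1)) * Ring.choose (((n+1:ℕ):ℝ)+a+b+((j+1:ℕ):ℝ)) (j+1) * X^(j+1)
     + (n+b+1) * ∑ j ∈ Finset.range n, Ring.choose ((n:ℝ)+a) (n-(j+1)) * Ring.choose ((n:ℝ)+a+b+((j+1:ℕ):ℝ)) (j+1) * X^(j+1) := by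
    rw [← Finset.sum_add_distrib, Finset.mul_sum, Finset.mul_sum, Finset.mul_sum, ← Finset.sum_add_distrib]
    refine Finset.sum_congr rfl fun j hj => ?_
    have hj' : j < n := by simpa using hj
    obtain ⟨d, rfl⟩ : ∃ d, n = j + 1 + d := ⟨n - (j+1), by omega⟩
    rw [show j + 1 + d - j = d + 1 by omega, show j + 1 + d - (j+1) = d by omega, show j + 1 + d + 1 - (j+1) = d+1 by omega]
    push_cast
    have e1 : ((j:ℝ)+1+d+1+a) = ((j:ℝ)+1+d+a)+1 := by ring
    have e2 : ((j:ℝ)+1+d+a+(b+1)+(j+1)) = ((j:ℝ)+1+d+a+b+(j+1))+1 := by ring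
    have e3 : ((j:ℝ)+1+d+1+a+b+(j+1)) = ((j:ℝ)+1+d+a+b+(j+1))+1 := by ring
    have e4 : ((j:ℝ)+1+d+a+(b+1)+j) = ((j:ℝ)+1+d+a+b+(j+1)) := by ring
    rw [e2, e3, e1, e4, rc_succ_succ, rc_succ_succ, rc_succ, rc_succ]
    field_simp; ring
  linear_combination tj + t0 + X^(n+1) * t1

/-- hypergeometric coefficients -/
noncomputable def qc (n : ℕ) (α : ℝ) : ℕ → ℝ
  | 0 => 1
  | (j+1) => qc n α j * (((j:ℝ) - n) * (n + α + j) / ((α + 1/2 + j) * (j+1)))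

theorem jac_three (n : ℕ) (α x : ℝ) (hα : 0 < α) :
    jacobiP n (α-1/2) (-1/2) x = Ring.choose ((n:ℝ)+(α-1/2)) n *
      ∑ j ∈ Finset.range (n+1), qc n α j * ((1-x)/2)^j := by
  rw [jac_hyp n _ _ x (by linarith) (by norm_num), Finset.mul_sum]
  refine Finset.sum_congr rfl fun j hj => ?_
  have hj' : j ≤ n := by simpa [Nat.lt_succ_iff] using hj
  rw [show (1-x)/2 = -((x-1)/2) by ring, neg_pow, ← mul_assoc, ← mul_assoc]
  congr 1
  clear hj
  induction j with
  | zero => simp [qc, Ring.choose_zero_right]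
  | succ j ih =>
    have ih := ih (by omega)
    obtain ⟨d, rfl⟩ : ∃ d, n = j + 1 + d := ⟨n - (j+1), by omega⟩
    rw [show j + 1 + d - j = d + 1 by omega] at ih
    rw [show j + 1 + d - (j+1) = d by omega]
    simp only [qc, pow_succ]
    push_cast at ih ⊢
    have e2 : (j:ℝ)+1+d+(α-1/2)+(-1/2)+(j+1) = (j:ℝ)+1+d+(α-1/2)+(-1/2)+j+1 := by ring
    rw [e2, rc_succ_succ, rc_succ]
    rw [rc_succ _ d] at ih
    have hne : α + 1/2 + (j:ℝ) ≠ 0 := by positivity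
    have : Ring.choose ((j:ℝ)+1+d+(α-1/2)) d * Ring.choose ((j:ℝ)+1+d+(α-1/2)+(-1/2)+j) j = 
       (d+1) / (α+1/2+j) * (Ring.choose ((j:ℝ)+1+d+(α-1/2)) (j+1+d) * qc (j+1+d) α j * (-1)^j) := by
      rw [← ih]; field_simp; ring
    have h2 : ∀ A B C : ℝ, A * (B + C * B) = A * B * (1 + C) := by intros; ring
    rw [h2, this]
    field_simp; ring

theorem rc_pos (n : ℕ) (r : ℝ) (h : (n:ℝ) - 1 < r) : 0 < Ring.choose r n := by
  induction n with
  | zero => simp [Ring.choose_zero_right]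
  | succ n ih =>
    push_cast at h
    rw [rc_succ]
    have : 0 < r - n := by linarith
    have := ih (by linarith)
    positivity


/-- truncated power -/
noncomputable def pp (δ x : ℝ) : ℝ := (max x 0) ^ δ

theorem pp_cont {δ : ℝ} (hδ : 0 ≤ δ) : Continuous (pp δ) := by
  unfold pp
  exact (continuous_id.max continuous_const).rpow_const (fun _ => Or.inr hδ)

theorem pp_of_nonneg {δ x : ℝ} (hx : 0 ≤ x) : pp δ x = x ^ δ := by simp [pp, hx]

theorem pp_of_nonpos {δ x : ℝ} (hδ : 0 < δ) (hx : x ≤ 0) : pp δ x = 0 := by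
  simp [pp, hx, Real.zero_rpow hδ.ne']

theorem pp_nonneg (δ x : ℝ) : 0 ≤ pp δ x := by unfold pp; positivity

theorem pp_deriv {δ : ℝ} (hδ : 1 < δ) (x : ℝ) : HasDerivAt (pp δ) (δ * pp (δ-1) x) x := by
  rcases lt_trichotomy x 0 with h | h | h
  · rw [pp_of_nonpos (by linarith) h.le, mul_zero]
    refine (hasDerivAt_const x (0:ℝ)).congr_of_eventuallyEq ?_
    filter_upwards [Iio_mem_nhds h] with y hy
    exact pp_of_nonpos (by linarith) (le_of_lt hy)
  · subst h
    rw [pp_of_nonpos (by linarith) le_rfl, mul_zero]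
    have h1 : HasDerivWithinAt (pp δ) 0 (Iic 0) 0 :=
      (hasDerivWithinAt_const (0:ℝ) (Iic 0) (0:ℝ)).congr (fun y hy => pp_of_nonpos (by linarith) hy)
        (pp_of_nonpos (by linarith) le_rfl)
    have h2 : HasDerivWithinAt (pp δ) 0 (Ici 0) 0 := by
      have := (Real.hasDerivAt_rpow_const (x := 0) (p := δ) (Or.inr hδ.le)).hasDerivWithinAt (s := Ici 0)
      rw [Real.zero_rpow (by linarith), mul_zero] at this
      exact this.congr (fun y hy => pp_of_nonneg hy) (pp_of_nonneg le_rfl)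
    have := h1.union h2
    rwa [Iic_union_Ici, hasDerivWithinAt_univ] at this
  · rw [pp_of_nonneg h.le]
    refine (Real.hasDerivAt_rpow_const (Or.inl h.ne')).congr_of_eventuallyEq ?_
    filter_upwards [Ioi_mem_nhds h] with y hy
    exact pp_of_nonneg (le_of_lt hy)

noncomputable def Gf (δ : ℝ) (u : ℝ → ℝ) (s : ℝ) : ℝ := ∫ θ in (0:ℝ)..π, pp δ (s - θ) * u θ

theorem Gf_cont_int {δ : ℝ} (hδ : 0 ≤ δ) {u : ℝ → ℝ} (hu : ContinuousOn u (Icc 0 π)) (s : ℝ) :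
    ContinuousOn (fun θ => pp δ (s - θ) * u θ) (Icc 0 π) :=
  (((pp_cont hδ).comp (continuous_const.sub continuous_id)).continuousOn).mul hu

theorem Gf_int {δ : ℝ} (hδ : 0 ≤ δ) {u : ℝ → ℝ} (hu : ContinuousOn u (Icc 0 π)) (s : ℝ) :
    IntervalIntegrable (fun θ => pp δ (s - θ) * u θ) volume 0 π := by
  apply ContinuousOn.intervalIntegrable
  rw [uIcc_of_le pi_pos.le]
  exact Gf_cont_int hδ hu s

theorem Gf_zero {δ : ℝ} (hδ : 0 < δ) (u : ℝ → ℝ) : Gf δ u 0 = 0 := by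
  unfold Gf
  rw [intervalIntegral.integral_congr (g := fun _ => (0:ℝ))]
  · simp
  · intro θ hθ
    rw [uIcc_of_le pi_pos.le] at hθ
    simp only
    rw [pp_of_nonpos hδ (by linarith [hθ.1]), zero_mul]

theorem Gf_deriv {δ : ℝ} (hδ : 1 < δ) {u : ℝ → ℝ} (hu : ContinuousOn u (Icc 0 π)) (s : ℝ) :
    HasDerivAt (Gf δ u) (δ * Gf (δ-1) u s) s := by
  obtain ⟨M, hM⟩ := isCompact_Icc.exists_bound_of_continuousOn hu
  have hM0 : 0 ≤ M := (norm_nonneg _).trans (hM 0 ⟨le_rfl, pi_pos.le⟩)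
  have key := intervalIntegral.hasDerivAt_integral_of_dominated_loc_of_deriv_le (μ := volume) (a := 0) (b := π)
    (F := fun s θ => pp δ (s - θ) * u θ) (F' := fun s θ => δ * pp (δ-1) (s - θ) * u θ) (x₀ := s)
    (s := Iio (s+1)) (bound := fun θ => δ * pp (δ-1) (s+1) * M) (Iio_mem_nhds (by linarith))
    (Filter.Eventually.of_forall fun y => by
      have := (Gf_int (by linarith : 0 ≤ δ) hu y).aestronglyMeasurable
      rwa [uIoc_of_le pi_pos.le])
    (Gf_int (by linarith : 0 ≤ δ) hu s)
    (by
      have := ((Gf_int (by linarith : 0 ≤ δ - 1) hu s).const_mul δ).aestronglyMeasurable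
      rw [uIoc_of_le pi_pos.le]
      simpa [mul_assoc] using this)
    (Filter.Eventually.of_forall fun θ hθ y hy => by
      rw [uIoc_of_le pi_pos.le] at hθ
      have h1 := hM θ ⟨hθ.1.le, hθ.2⟩
      have h2 : pp (δ-1) (y - θ) ≤ pp (δ-1) (s+1) := by
        unfold pp
        apply Real.rpow_le_rpow (by positivity) _ (by linarith)
        apply max_le_max _ le_rfl
        have := hθ.1
        have : y < s + 1 := hy
        linarith
      rw [norm_mul, norm_mul, Real.norm_of_nonneg (by linarith : 0 ≤ δ), Real.norm_of_nonneg (pp_nonneg _ _)]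
      have := pp_nonneg (δ-1) (y-θ)
      have := pp_nonneg (δ-1) (s+1)
      gcongr)
    (by simp)
    (Filter.Eventually.of_forall fun θ hθ y hy => by
      have := ((pp_deriv hδ (y-θ)).comp y ((hasDerivAt_id y).sub_const θ)).mul_const (u θ)
      simpa using this)
  have := key.2
  unfold Gf
  rw [← intervalIntegral.integral_const_mul]
  simpa [mul_assoc] using this

theorem Gf_parts {δ : ℝ} (hδ : 1 < δ) {u u' : ℝ → ℝ} (hu : ContinuousOn u (Icc 0 π))
    (hu' : ContinuousOn u' (Icc 0 π)) (hd : ∀ θ ∈ Ioo 0 π, HasDerivAt u (u' θ) θ) (h0 : u 0 = 0)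
    (s : ℝ) (hs : s ≤ π) : Gf δ u' s = δ * Gf (δ-1) u s := by
  have h1 := Gf_int (by linarith : 0 ≤ δ) hu' s
  have h2 := (Gf_int (by linarith : 0 ≤ δ - 1) hu s).const_mul δ
  have := intervalIntegral.integral_eq_sub_of_hasDerivAt_of_le (f := fun θ => pp δ (s - θ) * u θ)
    (f' := fun θ => pp δ (s-θ) * u' θ - δ * (pp (δ-1) (s-θ) * u θ)) pi_pos.le (Gf_cont_int (by linarith) hu s)
    (fun θ hθ => by
      have := ((pp_deriv hδ (s-θ)).comp θ ((hasDerivAt_id θ).const_sub s)).mul (hd θ hθ)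
      refine HasDerivAt.congr_deriv this ?_
      simp only [Function.comp, id]
      ring)
    (h1.sub h2)
  rw [intervalIntegral.integral_sub h1 h2, intervalIntegral.integral_const_mul, h0,
    pp_of_nonpos (by linarith) (by linarith)] at this
  unfold Gf
  linarith

theorem osc_exists (n : ℕ) : ∃ k S C : ℝ → ℝ, (∀ x, HasDerivAt k (S x) x) ∧ (∀ x, HasDerivAt S (C x) x) ∧
    (∀ x, HasDerivAt C (-(n:ℝ)^2 * S x) x) ∧ k 0 = 0 ∧ S 0 = 0 ∧ C 0 = 1 ∧ (∀ x, 0 ≤ k x) ∧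
    (∀ ε > 0, ∀ t > 0, ∃ s, 0 < s ∧ s < ε ∧ s < t ∧ 0 < k (t - s)) := by
  rcases Nat.eq_zero_or_pos n with rfl | hn
  · refine ⟨fun x => x^2/2, fun x => x, fun _ => 1, fun x => ?_, fun x => hasDerivAt_id x, fun x => ?_, by simp, rfl, rfl, fun x => by positivity, ?_⟩
    · have := (hasDerivAt_pow 2 x).div_const 2
      exact HasDerivAt.congr_deriv this (by simp)
    · simpa using hasDerivAt_const x (1:ℝ)
    · intro ε hε t ht
      refine ⟨min ε t / 2, by positivity, ?_, ?_, ?_⟩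
      · have := min_le_left ε t; linarith
      · have := min_le_right ε t; linarith
      · have : 0 < t - min ε t / 2 := by have := min_le_right ε t; linarith
        positivity
  · have hn' : (0:ℝ) < n := by exact_mod_cast hn
    have hc : ∀ x, HasDerivAt (fun x => cos (n*x)) (-(n:ℝ)^2 * (sin (n*x)/n)) x := fun x => by
      have := (hasDerivAt_cos (n*x)).comp x ((hasDerivAt_id x).const_mul (n:ℝ))
      exact HasDerivAt.congr_deriv this (by simp; try field_simp)
    refine ⟨fun x => (1 - cos (n*x))/n^2, fun x => sin (n*x)/n, fun x => cos (n*x), fun x => ?_, fun x => ?_, hc, by simp, by simp, by simp, fun x => ?_, ?_⟩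
    · have := ((hc x).const_sub 1).div_const ((n:ℝ)^2)
      exact HasDerivAt.congr_deriv this (by simp; try field_simp)
    · have := ((hasDerivAt_sin (n*x)).comp x ((hasDerivAt_id x).const_mul (n:ℝ))).div_const (n:ℝ)
      exact HasDerivAt.congr_deriv this (by simp; try field_simp)
    · have := cos_le_one (n*x)
      have : 0 ≤ 1 - cos (n*x) := by linarith
      positivity
    · intro ε hε t ht
      obtain ⟨s, hs0, hs1, hs2, hs3⟩ : ∃ s, 0 < s ∧ s < ε ∧ s < t ∧ n * s < 1 := by
        refine ⟨min (min ε t) (1/n) / 2, by positivity, ?_, ?_, ?_⟩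
        · have := min_le_left (min ε t) (1/(n:ℝ)); have := min_le_left ε t; have : 0 < min (min ε t) (1/(n:ℝ)) := by positivity
          linarith
        · have := min_le_left (min ε t) (1/(n:ℝ)); have := min_le_right ε t; have : 0 < min (min ε t) (1/(n:ℝ)) := by positivity
          linarith
        · have := min_le_right (min ε t) (1/(n:ℝ))
          have h2 : (n:ℝ) * min (min ε t) (1/(n:ℝ)) ≤ n * (1/n) := by gcongr
          rw [mul_one_div_cancel hn'.ne'] at h2
          linarith
      have hpos : ∀ s', cos (n*(t-s')) ≠ 1 → 0 < (1 - cos (n*(t-s')))/(n:ℝ)^2 := fun s' h => by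
        have : cos (n*(t-s')) < 1 := lt_of_le_of_ne (cos_le_one _) h
        have : 0 < 1 - cos (n*(t-s')) := by linarith
        positivity
      by_cases h : cos (n*(t-s)) = 1
      · refine ⟨s/2, by linarith, by linarith, by linarith, hpos _ fun h2 => ?_⟩
        have h3 := (cos_eq_one_iff _).1 h
        obtain ⟨j, hj⟩ := h3
        have e : (n:ℝ) * (t - s/2) = n*s/2 + j * (2*π) := by rw [hj]; ring
        rw [e, cos_add_int_mul_two_pi] at h2
        have hns : 0 < (n:ℝ) * s := by positivity
        have := (cos_eq_one_iff_of_lt_of_lt (by linarith [pi_pos]) (by linarith [pi_gt_three])).1 h2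
        linarith
      · exact ⟨s, hs0, hs1, hs2, hpos _ h⟩

theorem step_lemma {δ : ℝ} (hδ : 1 < δ) (n : ℕ) {u u' u'' v : ℝ → ℝ} (hu : ContinuousOn u (Icc 0 π))
    (hu' : ContinuousOn u' (Icc 0 π)) (hu'' : ContinuousOn u'' (Icc 0 π))
    (hd : ∀ θ ∈ Ioo 0 π, HasDerivAt u (u' θ) θ) (hd' : ∀ θ ∈ Ioo 0 π, HasDerivAt u' (u'' θ) θ)
    (h0 : u 0 = 0) (h0' : u' 0 = 0) (hv : ∀ θ ∈ Icc 0 π, v θ = u'' θ + n^2 * u θ)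
    (t : ℝ) (ht : t ∈ Ioc 0 π) (hpos : ∀ s ∈ Ioc 0 π, 0 ≤ Gf (δ-1) v s)
    (ε : ℝ) (hε : 0 < ε) (hpos' : ∀ s ∈ Ioc 0 π, s < ε → 0 < Gf (δ-1) v s) : 0 < Gf δ u t := by
  obtain ⟨k, S, C, hk, hS, hC, k0, S0, C0, kn, kp⟩ := osc_exists n
  have hvc : ContinuousOn v (Icc 0 π) := (hu''.add (hu.const_mul ((n:ℝ)^2))).congr hv
  have hR : ∀ s, Gf δ v s = Gf δ u'' s + n^2 * Gf δ u s := by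
    intro s
    unfold Gf
    rw [← intervalIntegral.integral_const_mul, ← intervalIntegral.integral_add (Gf_int (by linarith) hu'' s) ((Gf_int (by linarith) hu s).const_mul _)]
    apply intervalIntegral.integral_congr
    intro θ hθ
    rw [uIcc_of_le pi_pos.le] at hθ
    simp only
    rw [hv θ hθ]; ring
  set E : ℝ → ℝ := fun s => k (t-s) * Gf δ v s + S (t-s) * Gf δ u' s + C (t-s) * Gf δ u s with hE
  have hEd : ∀ s ≤ π, HasDerivAt E (k (t-s) * (δ * Gf (δ-1) v s)) s := by
    intro s hs
    have i := (hasDerivAt_id s).const_sub t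
    have a1 := ((hk (t-s)).comp s i).mul (Gf_deriv hδ hvc s)
    have a2 := ((hS (t-s)).comp s i).mul (Gf_deriv hδ hu' s)
    have a3 := ((hC (t-s)).comp s i).mul (Gf_deriv hδ hu s)
    rw [← Gf_parts hδ hu' hu'' hd' h0' s hs] at a2
    rw [← Gf_parts hδ hu hu' hd h0 s hs] at a3
    have := (a1.add a2).add a3
    refine HasDerivAt.congr_deriv this ?_
    simp only [Function.comp, id, hR]
    ring
  have hE0 : E 0 = 0 := by simp [hE, Gf_zero (by linarith : 0 < δ)]
  have hEt : E t = Gf δ u t := by simp [hE, k0, S0, C0]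
  have hmono : MonotoneOn E (Icc 0 t) := by
    apply monotoneOn_of_deriv_nonneg (convex_Icc 0 t)
    · intro s hs
      exact (hEd s (hs.2.trans ht.2)).continuousAt.continuousWithinAt
    · intro s hs
      rw [interior_Icc] at hs
      exact (hEd s (hs.2.le.trans ht.2)).differentiableAt.differentiableWithinAt
    · intro s hs
      rw [interior_Icc] at hs
      rw [(hEd s (hs.2.le.trans ht.2)).deriv]
      have := hpos s ⟨hs.1, hs.2.le.trans ht.2⟩
      have := kn (t-s)
      positivity
  by_contra hcon
  rw [← hEt] at hcon
  push Not at hcon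
  obtain ⟨s, hs0, hsε, hst, hks⟩ := kp ε hε t ht.1
  have hsd := hEd s (hst.le.trans ht.2)
  have hzero : HasDerivAt E 0 s := by
    refine (hasDerivAt_const s (0:ℝ)).congr_of_eventuallyEq ?_
    filter_upwards [Ioo_mem_nhds hs0 hst] with y hy
    have b1 := hmono ⟨le_rfl, ht.1.le⟩ ⟨hy.1.le, hy.2.le⟩ hy.1.le
    have b2 := hmono ⟨hy.1.le, hy.2.le⟩ ⟨ht.1.le, le_rfl⟩ hy.2.le
    linarith
  have := hsd.unique hzero
  have h3 := hpos' s ⟨hs0, hst.le.trans ht.2⟩ hsε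
  have : 0 < k (t-s) * (δ * Gf (δ-1) v s) := by positivity
  linarith


noncomputable def Sh (θ : ℝ) : ℝ := sin (θ/2) ^ 2

theorem Sh_nonneg (θ : ℝ) : 0 ≤ Sh θ := sq_nonneg _

theorem Sh_cont : Continuous Sh := by unfold Sh; fun_prop

theorem Sh_zero : Sh 0 = 0 := by simp [Sh]

theorem Sh_pos {θ : ℝ} (h : θ ∈ Ioo 0 π) : 0 < Sh θ := by
  have := sin_pos_of_pos_of_lt_pi (x := θ/2) (by linarith [h.1]) (by linarith [h.1, h.2])
  unfold Sh; positivity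

theorem Sh_cos (θ : ℝ) : cos θ = 1 - 2 * Sh θ := by
  have h := cos_two_mul (θ/2)
  have h2 := sin_sq_add_cos_sq (θ/2)
  rw [show 2 * (θ/2) = θ by ring] at h
  unfold Sh; linarith

theorem Sh_sin_sq (θ : ℝ) : (sin θ / 2)^2 = Sh θ * (1 - Sh θ) := by
  have := sin_sq_add_cos_sq θ
  rw [Sh_cos] at this
  linear_combination this/4

theorem Sh_deriv (θ : ℝ) : HasDerivAt Sh (sin θ / 2) θ := by
  have := ((hasDerivAt_cos θ).const_sub 1).div_const 2
  have e : Sh = fun θ => (1 - cos θ)/2 := by funext x; rw [Sh_cos]; ring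
  rw [e]
  exact HasDerivAt.congr_deriv this (by ring)

theorem Shr_deriv (r : ℝ) {θ : ℝ} (h : 0 < Sh θ) :
    HasDerivAt (fun θ => Sh θ ^ r) (r * Sh θ ^ (r-1) * (sin θ / 2)) θ := by
  have := (Sh_deriv θ).rpow_const (p := r) (Or.inl h.ne')
  exact HasDerivAt.congr_deriv this (by ring)

theorem Shr_deriv2 (r : ℝ) {θ : ℝ} (h : 0 < Sh θ) :
    HasDerivAt (fun θ => r * Sh θ ^ (r-1) * (sin θ / 2)) (r * (r-1/2) * Sh θ ^ (r-1) - r^2 * Sh θ ^ r) θ := by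
  have := ((Shr_deriv (r-1) h).const_mul r).mul ((hasDerivAt_sin θ).div_const 2)
  refine HasDerivAt.congr_deriv this ?_
  have e1 : Sh θ ^ (r-1) = Sh θ ^ (r-1-1) * Sh θ := by
    rw [← Real.rpow_add_one h.ne']; congr 1; ring
  have e2 : Sh θ ^ r = Sh θ ^ (r-1) * Sh θ := by
    rw [← Real.rpow_add_one h.ne']; congr 1; ring
  rw [e2, e1, Sh_cos]
  linear_combination r * (r-1) * Sh θ ^ (r-1-1) * Sh_sin_sq θ

theorem Shr_cont {r : ℝ} (hr : 0 ≤ r) : Continuous (fun θ => Sh θ ^ r) :=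
  Sh_cont.rpow_const (fun _ => Or.inr hr)

noncomputable def uq (n : ℕ) (α θ : ℝ) : ℝ :=
  ∑ j ∈ Finset.range (n+1), qc n α j * Sh θ ^ ((j:ℝ)+α)

theorem uq_cont (n : ℕ) {α : ℝ} (hα : 0 ≤ α) : Continuous (uq n α) := by
  unfold uq
  exact continuous_finsetSum _ fun j _ => (Shr_cont (by positivity)).const_mul _

theorem qc_zero (n : ℕ) (α : ℝ) : qc n α (n+1) = 0 := by simp [qc]

theorem qc_shift (n : ℕ) {α : ℝ} (hα : 1 < α) (j : ℕ) :
    qc (n+1) (α-1) (j+1) = -((n+1) * (n+α+j) / ((α-1/2) * (j+1))) * qc n α j := by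
  have h1 : α - 1/2 ≠ 0 := by linarith
  induction j with
  | zero => simp [qc]; field_simp; ring
  | succ j ih =>
    rw [qc, ih]
    conv_rhs => rw [qc]
    have h2 : α + 1/2 + (j:ℝ) ≠ 0 := by positivity
    have h3 : α - 1 + 1/2 + ((j+1:ℕ):ℝ) = α + 1/2 + j := by push_cast; ring
    rw [h3]
    push_cast
    field_simp
    ring

theorem uq_step (n : ℕ) {α : ℝ} (hα : 1 < α) (θ : ℝ) :
    α * (α-1/2) * uq (n+1) (α-1) θ =
    ∑ j ∈ Finset.range (n+1), qc n α j * (((j:ℝ)+α) * ((j:ℝ)+α-1/2) * Sh θ ^ ((j:ℝ)+α-1) - ((j:ℝ)+α)^2 * Sh θ ^ ((j:ℝ)+α))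
      + n^2 * uq n α θ := by
  have h1 : α - 1/2 ≠ 0 := by linarith
  unfold uq
  rw [Finset.sum_range_succ' _ (n+1)]
  simp only [qc_shift n hα]
  set T : ℕ → ℝ := fun j => Sh θ ^ ((j:ℝ)+α-1) with hT
  have eT : ∀ j : ℕ, Sh θ ^ ((j:ℝ)+α) = T (j+1) := fun j => by simp only [hT]; congr 1; push_cast; ring
  have eT1 : ∀ j : ℕ, Sh θ ^ (((j+1:ℕ):ℝ)+(α-1)) = T (j+1) := fun j => by simp only [hT]; congr 1; push_cast; ring
  have eT2 : Sh θ ^ (((0:ℕ):ℝ)+(α-1)) = T 0 := by simp only [hT]; congr 1; push_cast; ring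
  have eT3 : ∀ j : ℕ, Sh θ ^ ((j:ℝ)+α-1) = T j := fun j => rfl
  simp only [eT, eT1, eT2, eT3]
  have key : ∑ j ∈ Finset.range (n+1), qc n α j * (((j:ℝ)+α) * ((j:ℝ)+α-1/2) * T j)
    = ∑ j ∈ Finset.range (n+1), qc n α (j+1) * (((j:ℝ)+1+α) * ((j:ℝ)+1+α-1/2) * T (j+1)) + α * (α-1/2) * T 0 := by
    rw [Finset.sum_range_succ', Finset.sum_range_succ _ n, qc_zero]
    simp [qc]
  simp only [mul_sub, Finset.sum_sub_distrib]
  simp only [← mul_sub]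
  rw [key, mul_add, Finset.mul_sum, Finset.mul_sum]
  have : ∀ A B C D E : ℝ, A = B - C + D → A + E = B + E - C + D := by intros; linarith
  have q0 : α * (α - 1/2) * (qc (n+1) (α-1) 0 * T 0) = α * (α - 1/2) * T 0 := by simp [qc]
  rw [q0]
  apply this
  rw [← Finset.sum_sub_distrib, ← Finset.sum_add_distrib]
  refine Finset.sum_congr rfl fun j _ => ?_
  have h2 : α + 1/2 + (j:ℝ) ≠ 0 := by positivity
  rw [qc]
  have h3 : 2 * α - 1 ≠ 0 := by linarith
  have h4 : α * 2 - 1 ≠ 0 := by linarith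
  field_simp
  ring

theorem uq_pos_step {α δ : ℝ} (hα : 1 < α) (hδ : 1 < δ)
    (h : ∀ n : ℕ, ∀ t ∈ Ioc 0 π, 0 < Gf (δ-1) (uq n (α-1)) t) (n : ℕ) (t : ℝ) (ht : t ∈ Ioc 0 π) :
    0 < Gf δ (uq n α) t := by
  have hc : ∀ s, Gf (δ-1) (fun θ => α * (α-1/2) * uq (n+1) (α-1) θ) s = α * (α-1/2) * Gf (δ-1) (uq (n+1) (α-1)) s := by
    intro s
    unfold Gf
    rw [← intervalIntegral.integral_const_mul]
    congr 1; funext θ; ring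
  have hcp : 0 < α * (α-1/2) := mul_pos (by linarith) (by linarith)
  refine step_lemma (u := uq n α) 
    (u' := fun θ => ∑ j ∈ Finset.range (n+1), qc n α j * (((j:ℝ)+α) * Sh θ ^ ((j:ℝ)+α-1) * (sin θ / 2)))
    (u'' := fun θ => ∑ j ∈ Finset.range (n+1), qc n α j * (((j:ℝ)+α) * ((j:ℝ)+α-1/2) * Sh θ ^ ((j:ℝ)+α-1) - ((j:ℝ)+α)^2 * Sh θ ^ ((j:ℝ)+α)))
    (v := fun θ => α * (α-1/2) * uq (n+1) (α-1) θ) hδ n (uq_cont n (by linarith)).continuousOn ?_ ?_ ?_ ?_ ?_ ?_ (fun θ _ => uq_step n hα θ) t ht ?_ 1 one_pos ?_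
  · apply Continuous.continuousOn
    refine continuous_finsetSum _ fun j _ => ?_
    have := Shr_cont (r := (j:ℝ)+α-1) (by have := j.cast_nonneg (α := ℝ); linarith)
    fun_prop
  · apply Continuous.continuousOn
    refine continuous_finsetSum _ fun j _ => ?_
    have := Shr_cont (r := (j:ℝ)+α-1) (by have := j.cast_nonneg (α := ℝ); linarith)
    have := Shr_cont (r := (j:ℝ)+α) (by have := j.cast_nonneg (α := ℝ); linarith)
    fun_prop
  · intro θ hθ
    exact HasDerivAt.fun_sum fun j _ => (Shr_deriv _ (Sh_pos hθ)).const_mul _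
  · intro θ hθ
    exact HasDerivAt.fun_sum fun j _ => (Shr_deriv2 _ (Sh_pos hθ)).const_mul _
  · unfold uq
    refine Finset.sum_eq_zero fun j _ => ?_
    rw [Sh_zero, Real.zero_rpow (by positivity), mul_zero]
  · simp
  · intro s hs
    rw [hc]
    exact (mul_pos hcp (h (n+1) s hs)).le
  · intro s hs _
    rw [hc]
    exact mul_pos hcp (h (n+1) s hs)


noncomputable def Dk : ℕ → ℝ → ℝ
  | 0, _ => 1
  | (n+1), θ => Dk n θ + 2 * cos ((n+1) * θ)

noncomputable def Dk1 : ℕ → ℝ → ℝ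
  | 0, _ => 0
  | (n+1), θ => Dk1 n θ + -(2 * (n+1) * sin ((n+1) * θ))

noncomputable def Dk2 : ℕ → ℝ → ℝ
  | 0, _ => 0
  | (n+1), θ => Dk2 n θ + -(2 * (n+1)^2 * cos ((n+1) * θ))

theorem Dk_deriv (n : ℕ) (θ : ℝ) : HasDerivAt (Dk n) (Dk1 n θ) θ := by
  induction n with
  | zero => exact hasDerivAt_const θ (1:ℝ)
  | succ n ih =>
    have := ((hasDerivAt_cos (((n:ℝ)+1)*θ)).comp θ ((hasDerivAt_id θ).const_mul ((n:ℝ)+1))).const_mul 2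
    exact HasDerivAt.congr_deriv (ih.add this) (by simp [Dk1]; ring)

theorem Dk1_deriv (n : ℕ) (θ : ℝ) : HasDerivAt (Dk1 n) (Dk2 n θ) θ := by
  induction n with
  | zero => exact hasDerivAt_const θ (0:ℝ)
  | succ n ih =>
    have := (((hasDerivAt_sin (((n:ℝ)+1)*θ)).comp θ ((hasDerivAt_id θ).const_mul ((n:ℝ)+1))).const_mul (2 * ((n:ℝ)+1))).neg
    exact HasDerivAt.congr_deriv (ih.add this) (by simp [Dk2]; ring)

theorem Dk_cont (n : ℕ) : Continuous (Dk n) :=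
  continuous_iff_continuousAt.2 fun θ => (Dk_deriv n θ).continuousAt

theorem Dk1_cont (n : ℕ) : Continuous (Dk1 n) :=
  continuous_iff_continuousAt.2 fun θ => (Dk1_deriv n θ).continuousAt

theorem Dk1_pi (n : ℕ) : Dk1 n π = 0 := by
  induction n with
  | zero => rfl
  | succ n ih =>
    have : sin (((n:ℝ)+1) * π) = 0 := by exact_mod_cast sin_nat_mul_pi (n+1)
    simp [Dk1, ih, this]

theorem Dk_cos (n : ℕ) (θ : ℝ) : (cos θ - 1) * Dk n θ = cos ((n+1) * θ) - cos (n * θ) := by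
  induction n with
  | zero => simp [Dk]
  | succ n ih =>
    have e1 : ((n+1:ℕ):ℝ) + 1 = n + 1 + 1 := by push_cast; ring
    have h1 : cos (((n:ℝ)+1+1) * θ) = cos (((n:ℝ)+1)*θ) * cos θ - sin (((n:ℝ)+1)*θ) * sin θ := by
      rw [← cos_add]; congr 1; ring
    have h2 : cos ((n:ℝ) * θ) = cos (((n:ℝ)+1)*θ) * cos θ + sin (((n:ℝ)+1)*θ) * sin θ := by
      rw [← cos_sub]; congr 1; ring
    rw [Dk, mul_add, ih, e1, h1, h2]; push_cast; ring

theorem Dk_sin (n : ℕ) (θ : ℝ) : sin θ * sin ((n+1) * θ) = Sh θ * (Dk (n+1) θ + Dk n θ) := by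
  have hS : Sh θ = -(cos θ - 1)/2 := by rw [Sh_cos]; ring
  have a1 := Dk_cos n θ
  have a2 := Dk_cos (n+1) θ
  have e1 : ((n+1:ℕ):ℝ) + 1 = n + 1 + 1 := by push_cast; ring
  have h1 : cos (((n:ℝ)+1+1) * θ) = cos (((n:ℝ)+1)*θ) * cos θ - sin (((n:ℝ)+1)*θ) * sin θ := by
    rw [← cos_add]; congr 1; ring
  have h2 : cos ((n:ℝ) * θ) = cos (((n:ℝ)+1)*θ) * cos θ + sin (((n:ℝ)+1)*θ) * sin θ := by
    rw [← cos_sub]; congr 1; ring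
  rw [e1, h1] at a2
  rw [h2] at a1
  push_cast at a2
  rw [hS]
  linear_combination (1/2) * a1 + (1/2) * a2

theorem Dk_ode (n : ℕ) (α θ : ℝ) (h : 0 < Sh θ) :
    Dk2 n θ + α * (sin θ / (2 * Sh θ)) * Dk1 n θ =
      -(n * (n+α)) * Dk n θ + (1-α) * ∑ k ∈ Finset.range n, (2*(k:ℝ)+1) * Dk k θ := by
  induction n with
  | zero => simp [Dk2, Dk1]
  | succ n ih =>
    have hs : sin θ / (2 * Sh θ) * sin ((n+1) * θ) = (Dk (n+1) θ + Dk n θ)/2 := by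
      rw [div_mul_eq_mul_div, Dk_sin]; field_simp
    have hd : 2 * cos ((n+1)*θ) = Dk (n+1) θ - Dk n θ := by rw [Dk]; ring
    rw [Finset.sum_range_succ, mul_add, Dk2, Dk1]
    push_cast
    linear_combination ih - (n+1)^2 * hd - 2 * α * (n+1) * hs

noncomputable def Aq (m : ℕ) (α θ : ℝ) : ℝ :=
  ∑ j ∈ Finset.range m, qc m α (j+1) * (j+1) * (Sh θ ^ ((j:ℝ)+α) * (sin θ / 2))

theorem Aq_cont (m : ℕ) {α : ℝ} (hα : 0 ≤ α) : Continuous (Aq m α) := by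
  unfold Aq
  refine continuous_finsetSum _ fun j _ => ?_
  have := Shr_cont (r := (j:ℝ)+α) (by positivity)
  fun_prop

theorem Aq_deriv (m : ℕ) {α θ : ℝ} (hα : 0 < α) (h : 0 < Sh θ) :
    HasDerivAt (Aq m α) (-(m * (m+α)) * uq m α θ) θ := by
  have h1 : HasDerivAt (Aq m α) (∑ j ∈ Finset.range m, qc m α (j+1) * (j+1) *
      (((j:ℝ)+α+1/2) * Sh θ ^ ((j:ℝ)+α) - ((j:ℝ)+α+1) * Sh θ ^ (((j+1:ℕ):ℝ)+α))) θ := by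
    refine HasDerivAt.fun_sum fun j _ => HasDerivAt.const_mul _ ?_
    have := (Shr_deriv ((j:ℝ)+α) h).mul ((hasDerivAt_sin θ).div_const 2)
    refine HasDerivAt.congr_deriv this ?_
    have e1 : Sh θ ^ ((j:ℝ)+α) = Sh θ ^ ((j:ℝ)+α-1) * Sh θ := by
      rw [← Real.rpow_add_one h.ne']; congr 1; ring
    have e2 : Sh θ ^ (((j+1:ℕ):ℝ)+α) = Sh θ ^ ((j:ℝ)+α) * Sh θ := by
      rw [← Real.rpow_add_one h.ne']; congr 1; push_cast; ring
    rw [e2, e1, Sh_cos]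
    linear_combination ((j:ℝ)+α) * Sh θ ^ ((j:ℝ)+α-1) * Sh_sin_sq θ
  refine HasDerivAt.congr_deriv h1 ?_
  unfold uq
  simp only [mul_sub, Finset.sum_sub_distrib]
  have k1 : ∑ j ∈ Finset.range m, qc m α (j+1) * (j+1) * (((j:ℝ)+α+1/2) * Sh θ ^ ((j:ℝ)+α))
    = ∑ j ∈ Finset.range (m+1), qc m α (j+1) * (j+1) * (((j:ℝ)+α+1/2) * Sh θ ^ ((j:ℝ)+α)) := by
    rw [Finset.sum_range_succ, qc_zero]; ring
  have k2 : ∑ j ∈ Finset.range m, qc m α (j+1) * (j+1) * (((j:ℝ)+α+1) * Sh θ ^ (((j+1:ℕ):ℝ)+α))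
    = ∑ j ∈ Finset.range (m+1), qc m α j * j * (((j:ℝ)+α) * Sh θ ^ ((j:ℝ)+α)) := by
    rw [Finset.sum_range_succ']
    simp only [Nat.cast_zero, mul_zero, zero_mul, add_zero]
    refine Finset.sum_congr rfl fun j _ => ?_
    push_cast; ring
  rw [k1, k2, ← Finset.sum_sub_distrib, Finset.mul_sum]
  refine Finset.sum_congr rfl fun j _ => ?_
  have : α + 1/2 + (j:ℝ) ≠ 0 := by positivity
  rw [qc]
  field_simp
  ring

theorem uq_deriv (m : ℕ) {α θ : ℝ} (h : 0 < Sh θ) :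
    HasDerivAt (uq m α) (α * (sin θ / (2 * Sh θ)) * uq m α θ + Aq m α θ) θ := by
  have h1 : HasDerivAt (uq m α) (∑ j ∈ Finset.range (m+1), qc m α j * (((j:ℝ)+α) * Sh θ ^ ((j:ℝ)+α-1) * (sin θ / 2))) θ :=
    HasDerivAt.fun_sum fun j _ => (Shr_deriv _ h).const_mul _
  refine HasDerivAt.congr_deriv h1 ?_
  have h2 : Aq m α θ = ∑ j ∈ Finset.range (m+1), qc m α j * (j * Sh θ ^ ((j:ℝ)+α-1) * (sin θ / 2)) := by
    rw [Finset.sum_range_succ']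
    simp only [Nat.cast_zero, mul_zero, zero_mul, add_zero, Aq]
    refine Finset.sum_congr rfl fun j _ => ?_
    rw [show ((j+1:ℕ):ℝ)+α-1 = j+α by push_cast; ring]
    push_cast; ring
  rw [h2, uq, Finset.mul_sum, ← Finset.sum_add_distrib]
  refine Finset.sum_congr rfl fun j _ => ?_
  have e1 : Sh θ ^ ((j:ℝ)+α) = Sh θ ^ ((j:ℝ)+α-1) * Sh θ := by
    rw [← Real.rpow_add_one h.ne']; congr 1; ring
  rw [e1]; field_simp; ring

theorem uq_zero (m : ℕ) {α : ℝ} (hα : 0 < α) : uq m α 0 = 0 := by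
  unfold uq
  refine Finset.sum_eq_zero fun j _ => ?_
  rw [Sh_zero, Real.zero_rpow (by positivity), mul_zero]

noncomputable def Bk (m : ℕ) (α : ℝ) (n : ℕ) : ℝ := ∫ θ in (0:ℝ)..π, Dk n θ * uq m α θ

theorem Bk_rec (m : ℕ) {α : ℝ} (hα : 0 < α) (n : ℕ) :
    ((n:ℝ)-m) * (n+m+α) * Bk m α n = (1-α) * ∑ k ∈ Finset.range n, (2*(k:ℝ)+1) * Bk m α k := by
  have hint : ∀ k, IntervalIntegrable (fun θ => Dk k θ * uq m α θ) volume 0 π := fun k =>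
    ((Dk_cont k).mul (uq_cont m hα.le)).intervalIntegrable _ _
  have hi2 : IntervalIntegrable (fun θ => ∑ k ∈ Finset.range n, (2*(k:ℝ)+1) * (Dk k θ * uq m α θ)) volume 0 π := by
    apply Continuous.intervalIntegrable
    exact continuous_finsetSum _ fun k _ => ((Dk_cont k).mul (uq_cont m hα.le)).const_mul _
  have key := intervalIntegral.integral_eq_sub_of_hasDerivAt_of_le (f := fun θ => Aq m α θ * Dk n θ - Dk1 n θ * uq m α θ)
    (f' := fun θ => ((n:ℝ)-m) * (n+m+α) * (Dk n θ * uq m α θ) - (1-α) * ∑ k ∈ Finset.range n, (2*(k:ℝ)+1) * (Dk k θ * uq m α θ)) pi_pos.le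
    ((((Aq_cont m hα.le).mul (Dk_cont n)).sub ((Dk1_cont n).mul (uq_cont m hα.le))).continuousOn)
    (fun θ hθ => by
      have hp := Sh_pos hθ
      have := ((Aq_deriv m hα hp).mul (Dk_deriv n θ)).sub ((Dk1_deriv n θ).mul (uq_deriv m (α := α) hp))
      refine HasDerivAt.congr_deriv this ?_
      have ode := Dk_ode n α θ hp
      have hs : ∑ k ∈ Finset.range n, (2*(k:ℝ)+1) * (Dk k θ * uq m α θ) = (∑ k ∈ Finset.range n, (2*(k:ℝ)+1) * Dk k θ) * uq m α θ := by
        rw [Finset.sum_mul]; exact Finset.sum_congr rfl fun _ _ => by ring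
      rw [hs]
      linear_combination (-uq m α θ) * ode)
    (((hint n).const_mul _).sub (hi2.const_mul _))
  rw [intervalIntegral.integral_sub ((hint n).const_mul _) (hi2.const_mul _), intervalIntegral.integral_const_mul,
    intervalIntegral.integral_const_mul, intervalIntegral.integral_finsetSum (fun k _ => (hint k).const_mul _)] at key
  simp only [intervalIntegral.integral_const_mul] at key
  have z1 : Aq m α π = 0 := by simp [Aq]
  have z2 : Aq m α 0 = 0 := by simp [Aq]
  simp only [z1, z2, Dk1_pi, uq_zero m hα] at key
  unfold Bk
  linarith

theorem Bk_lt (m : ℕ) {α : ℝ} (hα : 0 < α) (n : ℕ) (hn : n < m) : Bk m α n = 0 := by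
  induction n using Nat.strong_induction_on with
  | _ n ih =>
    have h := Bk_rec m hα n
    rw [Finset.sum_eq_zero (fun k hk => by
      have hk' : k < n := by simpa using hk
      rw [ih k hk' (by omega), mul_zero]), mul_zero] at h
    have h1 : ((n:ℝ)-m) ≠ 0 := by
      have : (n:ℝ) < m := by exact_mod_cast hn
      linarith
    have h2 : ((n:ℝ)+m+α) ≠ 0 := by positivity
    simpa [h1, h2] using h

theorem Sh_Dk (k : ℕ) (θ : ℝ) : Sh θ * Dk (k+1) θ = -(1/4) * Dk (k+2) θ + 1/2 * Dk (k+1) θ - 1/4 * Dk k θ := by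
  have hS : Sh θ = -(cos θ - 1)/2 := by rw [Sh_cos]; ring
  have a1 := Dk_cos (k+1) θ
  have e2 : Dk (k+2) θ = Dk (k+1) θ + 2 * cos ((((k+1:ℕ):ℝ)+1) * θ) := rfl
  have e3 : Dk (k+1) θ = Dk k θ + 2 * cos (((k+1:ℕ):ℝ) * θ) := by rw [Dk]; push_cast; rfl
  rw [hS]
  linear_combination (-1/2) * a1 - (-1/4) * e2 + (-1/4) * e3

theorem Sh_Dk0 (θ : ℝ) : Sh θ * Dk 0 θ = -(1/4) * Dk 1 θ + 3/4 * Dk 0 θ := by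
  have hS : Sh θ = -(cos θ - 1)/2 := by rw [Sh_cos]; ring
  simp only [Dk, hS, Nat.cast_zero, zero_add, one_mul]; ring

theorem Lk (m : ℕ) {α : ℝ} (hα : 0 < α) (j : ℕ) : ∀ k,
    (j + k < m → ∫ θ in (0:ℝ)..π, Sh θ ^ j * Dk k θ * uq m α θ = 0) ∧
    (j + k = m → ∫ θ in (0:ℝ)..π, Sh θ ^ j * Dk k θ * uq m α θ = (-(1/4))^j * Bk m α m) := by
  induction j with
  | zero =>
    intro k
    simp only [zero_add, pow_zero, one_mul]
    exact ⟨fun h => Bk_lt m hα k h, fun h => by rw [h]; rfl⟩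
  | succ j ih =>
    have hint : ∀ k, IntervalIntegrable (fun θ => Sh θ ^ j * Dk k θ * uq m α θ) volume 0 π := fun k =>
      (((Sh_cont.pow j).mul (Dk_cont k)).mul (uq_cont m hα.le)).intervalIntegrable _ _
    intro k
    cases k with
    | zero =>
      have e : ∫ θ in (0:ℝ)..π, Sh θ ^ (j+1) * Dk 0 θ * uq m α θ =
        -(1/4) * (∫ θ in (0:ℝ)..π, Sh θ ^ j * Dk 1 θ * uq m α θ) + 3/4 * ∫ θ in (0:ℝ)..π, Sh θ ^ j * Dk 0 θ * uq m α θ := by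
        rw [← intervalIntegral.integral_const_mul, ← intervalIntegral.integral_const_mul, ← intervalIntegral.integral_add ((hint _).const_mul _) ((hint _).const_mul _)]
        congr 1; funext θ
        linear_combination Sh θ ^ j * uq m α θ * Sh_Dk0 θ
      rw [e]
      constructor
      · intro h
        rw [(ih 1).1 (by omega), (ih 0).1 (by omega)]; ring
      · intro h
        rw [(ih 1).2 (by omega), (ih 0).1 (by omega)]; ring
    | succ k =>
      have e : ∫ θ in (0:ℝ)..π, Sh θ ^ (j+1) * Dk (k+1) θ * uq m α θ =
        -(1/4) * (∫ θ in (0:ℝ)..π, Sh θ ^ j * Dk (k+2) θ * uq m α θ) + 1/2 * (∫ θ in (0:ℝ)..π, Sh θ ^ j * Dk (k+1) θ * uq m α θ)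
         - 1/4 * (∫ θ in (0:ℝ)..π, Sh θ ^ j * Dk k θ * uq m α θ) := by
        rw [← intervalIntegral.integral_const_mul, ← intervalIntegral.integral_const_mul, ← intervalIntegral.integral_const_mul,
          ← intervalIntegral.integral_add ((hint _).const_mul _) ((hint _).const_mul _),
          ← intervalIntegral.integral_sub (((hint _).const_mul _).add ((hint _).const_mul _)) ((hint _).const_mul _)]
        congr 1; funext θ
        linear_combination Sh θ ^ j * uq m α θ * Sh_Dk k θ
      rw [e]
      constructor
      · intro h
        rw [(ih (k+2)).1 (by omega), (ih (k+1)).1 (by omega), (ih k).1 (by omega)]; ring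
      · intro h
        rw [(ih (k+2)).2 (by omega), (ih (k+1)).1 (by omega), (ih k).1 (by omega)]; ring

theorem qc_sign (n : ℕ) {α : ℝ} (hα : 0 < α) (j : ℕ) (hj : j ≤ n) : 0 < (-1)^j * qc n α j := by
  induction j with
  | zero => simp [qc]
  | succ j ih =>
    have h := ih (by omega)
    have hjn : (j:ℝ) < n := by exact_mod_cast hj
    have e : (-1)^(j+1) * qc n α (j+1) = ((-1)^j * qc n α j) * ((n - j) * (n+α+j) / ((α+1/2+j) * (j+1))) := by
      rw [qc]; field_simp; ring
    rw [e]
    have : 0 < (n:ℝ) - j := by linarith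
    positivity

theorem Bk_diag (m : ℕ) {α : ℝ} (hα : 0 < α) : 0 < Bk m α m := by
  set P : ℝ → ℝ := fun θ => ∑ j ∈ Finset.range (m+1), qc m α j * Sh θ ^ j with hP
  have hPc : Continuous P := continuous_finsetSum _ fun j _ => (Sh_cont.pow j).const_mul _
  have hu : ∀ θ ∈ Icc 0 π, uq m α θ = Sh θ ^ α * P θ := by
    intro θ _
    simp only [uq, hP, Finset.mul_sum]
    refine Finset.sum_congr rfl fun j _ => ?_
    rcases (Sh_nonneg θ).eq_or_lt with h | h
    · rw [← h, Real.zero_rpow (by positivity), Real.zero_rpow hα.ne']; ring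
    · rw [Real.rpow_add h, Real.rpow_natCast]; ring
  have h1 : ∫ θ in (0:ℝ)..π, P θ * uq m α θ = qc m α m * (-(1/4))^m * Bk m α m := by
    have hint : ∀ j, IntervalIntegrable (fun θ => Sh θ ^ j * Dk 0 θ * uq m α θ) volume 0 π := fun j =>
      (((Sh_cont.pow j).mul (Dk_cont 0)).mul (uq_cont m hα.le)).intervalIntegrable _ _
    have e : ∀ θ, P θ * uq m α θ = ∑ j ∈ Finset.range (m+1), qc m α j * (Sh θ ^ j * Dk 0 θ * uq m α θ) := by
      intro θ
      simp only [hP, Finset.sum_mul, Dk]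
      exact Finset.sum_congr rfl fun _ _ => by ring
    simp only [e]
    rw [intervalIntegral.integral_finsetSum (fun k _ => (hint k).const_mul _)]
    simp only [intervalIntegral.integral_const_mul]
    rw [Finset.sum_range_succ, (Lk m hα m 0).2 (by omega), Finset.sum_eq_zero]
    · ring
    · intro j hj
      have hj' : j < m := by simpa using hj
      rw [(Lk m hα j 0).1 (by omega), mul_zero]
  have h2 : 0 < ∫ θ in (0:ℝ)..π, P θ * uq m α θ := by
    apply intervalIntegral.integral_pos pi_pos (hPc.mul (uq_cont m hα.le)).continuousOn
    · intro θ hθ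
      show 0 ≤ P θ * uq m α θ
      rw [hu θ ⟨hθ.1.le, hθ.2⟩]
      have := Real.rpow_nonneg (Sh_nonneg θ) α
      nlinarith [mul_nonneg this (sq_nonneg (P θ))]
    · have hP0 : P 0 = 1 := by
        simp only [hP, Sh_zero]
        rw [Finset.sum_range_succ']
        simp [qc]
      have hev : ∀ᶠ θ in nhds (0:ℝ), 0 < P θ := hPc.continuousAt.eventually (Ioi_mem_nhds (by rw [hP0]; exact one_pos))
      have hev2 : ∀ᶠ θ in nhdsWithin (0:ℝ) (Ioi 0), θ ∈ Ioo 0 π := Ioo_mem_nhdsGT pi_pos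
      obtain ⟨c, hc1, hc2⟩ := ((hev.filter_mono nhdsWithin_le_nhds).and hev2).exists
      refine ⟨c, ⟨hc2.1.le, hc2.2.le⟩, ?_⟩
      show 0 < P c * uq m α c
      rw [hu c ⟨hc2.1.le, hc2.2.le⟩]
      have := Real.rpow_pos_of_pos (Sh_pos hc2) α
      positivity
  rw [h1] at h2
  have h3 := qc_sign m hα m le_rfl
  have e : qc m α m * (-(1/4))^m = ((-1)^m * qc m α m) * (1/4)^m := by
    rw [neg_pow]; ring
  rw [e] at h2
  exact pos_of_mul_pos_right h2 (by positivity)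

theorem Bk_nonneg (m : ℕ) {α : ℝ} (hα : 0 < α) (hα1 : α ≤ 1) (n : ℕ) : 0 ≤ Bk m α n := by
  induction n using Nat.strong_induction_on with
  | _ n ih =>
    rcases lt_trichotomy n m with h | h | h
    · exact (Bk_lt m hα n h).ge
    · rw [h]; exact (Bk_diag m hα).le
    · have hr := Bk_rec m hα n
      have h1 : 0 < ((n:ℝ)-m) := by
        have : (m:ℝ) < n := by exact_mod_cast h
        linarith
      have h2 : 0 < ((n:ℝ)+m+α) := by positivity
      have h3 : 0 ≤ (1-α) * ∑ k ∈ Finset.range n, (2*(k:ℝ)+1) * Bk m α k := by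
        apply mul_nonneg (by linarith)
        refine Finset.sum_nonneg fun k hk => ?_
        have := ih k (by simpa using hk)
        positivity
      rw [← hr] at h3
      exact nonneg_of_mul_nonneg_right h3 (by positivity)


theorem Gf_eq {η : ℝ} (hη : 0 < η) {u : ℝ → ℝ} (hu : Continuous u) {s : ℝ} (h0 : 0 ≤ s) (h1 : s ≤ π) :
    Gf η u s = ∫ θ in (0:ℝ)..s, (s - θ) ^ η * u θ := by
  have hc : Continuous fun θ => pp η (s - θ) * u θ :=
    ((pp_cont hη.le).comp (continuous_const.sub continuous_id)).mul hu
  unfold Gf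
  rw [← intervalIntegral.integral_add_adjacent_intervals (b := s) (hc.intervalIntegrable _ _) (hc.intervalIntegrable _ _)]
  have e1 : ∫ θ in (0:ℝ)..s, pp η (s - θ) * u θ = ∫ θ in (0:ℝ)..s, (s - θ) ^ η * u θ := by
    apply intervalIntegral.integral_congr
    intro θ hθ
    rw [uIcc_of_le h0] at hθ
    simp only
    rw [pp_of_nonneg (by linarith [hθ.2])]
  have e2 : ∫ θ in s..π, pp η (s - θ) * u θ = ∫ θ in s..π, (0:ℝ) := by
    apply intervalIntegral.integral_congr
    intro θ hθ
    rw [uIcc_of_le h1] at hθ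
    simp only
    rw [pp_of_nonpos hη (by linarith [hθ.1]), zero_mul]
  rw [e1, e2]; simp

theorem sth_cont {η : ℝ} (hη : 0 ≤ η) (s : ℝ) : Continuous fun θ : ℝ => (s - θ) ^ η :=
  (continuous_const.sub continuous_id).rpow_const fun _ => Or.inr hη

theorem sth_deriv (η s θ : ℝ) (h : θ < s) : HasDerivAt (fun θ : ℝ => (s - θ) ^ η) (-(η * (s - θ) ^ (η - 1))) θ := by
  have := ((hasDerivAt_id θ).const_sub s).rpow_const (p := η) (Or.inl (by simp only [id]; linarith))
  exact this.congr_deriv (by simp only [id]; ring)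

theorem cos_int_bounds {η : ℝ} (hη : 1 ≤ η) (N : ℕ) (hN : 1 ≤ N) {s : ℝ} (h0 : 0 ≤ s) :
    0 ≤ ∫ θ in (0:ℝ)..s, (s - θ) ^ η * cos (N * θ) ∧
    ∫ θ in (0:ℝ)..s, (s - θ) ^ η * cos (N * θ) ≤ 2 * η * s ^ (η-1) / N ^ 2 := by
  have hN' : (0:ℝ) < N := by exact_mod_cast hN
  have c1 := sth_cont (by linarith : 0 ≤ η) s
  have c2 := sth_cont (by linarith : 0 ≤ η - 1) s
  have hi : IntegrableOn (fun θ => (s - θ) ^ η * cos (N * θ)) (Icc 0 s) :=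
    (Continuous.continuousOn (by fun_prop)).integrableOn_Icc
  have dc : ∀ θ : ℝ, HasDerivAt (fun θ : ℝ => cos (N * θ)) (-(N * sin (N * θ))) θ := fun θ => by
    have := (hasDerivAt_cos ((N:ℝ)*θ)).comp θ ((hasDerivAt_id θ).const_mul (N:ℝ))
    exact this.congr_deriv (by ring)
  have ds : ∀ θ : ℝ, HasDerivAt (fun θ : ℝ => sin (N * θ)) (N * cos (N * θ)) θ := fun θ => by
    have := (hasDerivAt_sin ((N:ℝ)*θ)).comp θ ((hasDerivAt_id θ).const_mul (N:ℝ))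
    exact this.congr_deriv (by ring)
  have z : (0:ℝ) ^ η = 0 := Real.zero_rpow (by linarith)
  have z1 : 0 ≤ (0:ℝ) ^ (η-1) := Real.rpow_nonneg le_rfl _
  constructor
  · have := intervalIntegral.sub_le_integral_of_hasDeriv_right_of_le (φ := fun θ => (s - θ) ^ η * cos (N * θ))
      (g := fun θ => (s - θ) ^ η * (sin (N*θ) / N) + η * (s-θ)^(η-1) * ((1 - cos (N*θ)) / N^2))
      (g' := fun θ => (s - θ) ^ η * cos (N*θ) - η * ((η-1) * (s-θ)^(η-1-1)) * ((1 - cos (N*θ)) / N^2)) h0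
      (Continuous.continuousOn (by fun_prop))
      (fun θ hθ => by
        have := ((sth_deriv η s θ hθ.2).mul ((ds θ).div_const N)).add
          (((sth_deriv (η-1) s θ hθ.2).const_mul η).mul (((dc θ).const_sub 1).div_const (N^2)))
        refine (this.congr_deriv ?_).hasDerivWithinAt
        field_simp
        ring) hi
      (fun θ hθ => by
        have a1 : 0 ≤ (s-θ)^(η-1-1) := Real.rpow_nonneg (by linarith [hθ.2]) _
        have a2 : 0 ≤ (1 - cos (N*θ)) := by linarith [cos_le_one (N*θ)]
        have a3 : 0 ≤ η - 1 := by linarith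
        have : 0 ≤ η * ((η-1) * (s-θ)^(η-1-1)) * ((1 - cos (N*θ)) / N^2) := by positivity
        linarith)
    refine le_trans ?_ this
    simp only [sub_self, z, zero_mul, mul_zero, sin_zero, cos_zero, zero_div, zero_add, sub_zero, add_zero]
    have a2 : 0 ≤ (1 - cos (N*s)) := by linarith [cos_le_one (N*s)]
    positivity
  · have := intervalIntegral.integral_le_sub_of_hasDeriv_right_of_le (φ := fun θ => (s - θ) ^ η * cos (N * θ))
      (g := fun θ => (s - θ) ^ η * (sin (N*θ) / N) - η * (s-θ)^(η-1) * ((1 + cos (N*θ)) / N^2))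
      (g' := fun θ => (s - θ) ^ η * cos (N*θ) + η * ((η-1) * (s-θ)^(η-1-1)) * ((1 + cos (N*θ)) / N^2)) h0
      (Continuous.continuousOn (by fun_prop))
      (fun θ hθ => by
        have := ((sth_deriv η s θ hθ.2).mul ((ds θ).div_const N)).sub
          (((sth_deriv (η-1) s θ hθ.2).const_mul η).mul (((dc θ).const_add 1).div_const (N^2)))
        refine (this.congr_deriv ?_).hasDerivWithinAt
        field_simp
        ring) hi
      (fun θ hθ => by
        have a1 : 0 ≤ (s-θ)^(η-1-1) := Real.rpow_nonneg (by linarith [hθ.2]) _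
        have a2 : 0 ≤ (1 + cos (N*θ)) := by linarith [neg_one_le_cos (N*θ)]
        have a3 : 0 ≤ η - 1 := by linarith
        have : 0 ≤ η * ((η-1) * (s-θ)^(η-1-1)) * ((1 + cos (N*θ)) / N^2) := by positivity
        linarith)
    refine le_trans this ?_
    simp only [sub_self, z, zero_mul, mul_zero, sin_zero, cos_zero, zero_div, zero_sub, sub_zero]
    have a2 : 0 ≤ (1 + cos (N*s)) := by linarith [neg_one_le_cos (N*s)]
    have : 0 ≤ η * 0 ^ (η-1) * ((1 + cos (N*s)) / N^2) := by positivity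
    have e : 2 * η * s ^ (η-1) / N ^ 2 = η * s ^ (η-1) * ((1+1) / N^2) := by ring
    rw [e]; linarith

noncomputable def cf (δ t : ℝ) (n : ℕ) : ℝ := Gf δ (fun θ => cos (n * θ)) t

theorem cf_nonneg {δ t : ℝ} (hδ : 1 ≤ δ) (ht : t ∈ Ioc 0 π) (n : ℕ) : 0 ≤ cf δ t n := by
  rcases Nat.eq_zero_or_pos n with h | h
  · unfold cf Gf
    apply intervalIntegral.integral_nonneg pi_pos.le
    intro θ _
    simp [h, pp_nonneg]
  · rw [cf, Gf_eq (by linarith) (by fun_prop) ht.1.le ht.2]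
    exact (cos_int_bounds hδ n h ht.1.le).1

theorem cf_le {δ t : ℝ} (hδ : 1 ≤ δ) (ht : t ∈ Ioc 0 π) (n : ℕ) (h : 1 ≤ n) : cf δ t n ≤ 2 * δ * t ^ (δ-1) / n ^ 2 := by
  rw [cf, Gf_eq (by linarith) (by fun_prop) ht.1.le ht.2]
  exact (cos_int_bounds hδ n h ht.1.le).2

theorem cf_pos {δ t : ℝ} (hδ : 1 ≤ δ) (ht : t ∈ Ioc 0 π) (n : ℕ) (h : n * t < π / 2) : 0 < cf δ t n := by
  rw [cf, Gf_eq (by linarith) (by fun_prop) ht.1.le ht.2]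
  apply intervalIntegral.intervalIntegral_pos_of_pos_on
  · have c1 := sth_cont (by linarith : 0 ≤ δ) t
    exact Continuous.intervalIntegrable (by fun_prop) _ _
  · intro θ hθ
    have h1 : 0 < (t - θ) ^ δ := Real.rpow_pos_of_pos (by linarith [hθ.2]) _
    have h2 : (n:ℝ) * θ ≤ n * t := by have := hθ.2; gcongr
    have h3 : 0 ≤ (n:ℝ) * θ := by have := hθ.1; positivity
    have := cos_pos_of_mem_Ioo ⟨by linarith [pi_pos], by linarith⟩ (x := n * θ)
    positivity
  · exact ht.1

theorem cf_anti {δ t : ℝ} (hδ : 2 ≤ δ) (ht : t ∈ Ioc 0 π) (n : ℕ) : cf δ t (n+1) < cf δ t n := by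
  have dc : ∀ a θ : ℝ, HasDerivAt (fun θ : ℝ => cos (a * θ)) (-(a * sin (a * θ))) θ := fun a θ => by
    have := (hasDerivAt_cos (a*θ)).comp θ ((hasDerivAt_id θ).const_mul a)
    exact this.congr_deriv (by ring)
  have ds : ∀ a θ : ℝ, HasDerivAt (fun θ : ℝ => sin (a * θ)) (a * cos (a * θ)) θ := fun a θ => by
    have := (hasDerivAt_sin (a*θ)).comp θ ((hasDerivAt_id θ).const_mul a)
    exact this.congr_deriv (by ring)
  have hc : ∀ s, Gf (δ-1) (fun θ => (2*n+1) * cos (((n+1:ℕ):ℝ) * θ)) s = (2*n+1) * cf (δ-1) s (n+1) := by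
    intro s
    unfold cf Gf
    rw [← intervalIntegral.integral_const_mul]
    congr 1; funext θ; ring
  have key : 0 < Gf δ (fun θ => cos (n*θ) - cos (((n+1:ℕ):ℝ)*θ)) t := by
    refine step_lemma (u := fun θ => cos (n*θ) - cos (((n+1:ℕ):ℝ)*θ))
      (u' := fun θ => -(n * sin (n*θ)) - -(((n+1:ℕ):ℝ) * sin (((n+1:ℕ):ℝ)*θ)))
      (u'' := fun θ => -(n * (n * cos (n*θ))) - -(((n+1:ℕ):ℝ) * (((n+1:ℕ):ℝ) * cos (((n+1:ℕ):ℝ)*θ))))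
      (v := fun θ => (2*n+1) * cos (((n+1:ℕ):ℝ) * θ)) (by linarith) n
      (Continuous.continuousOn (by fun_prop)) (Continuous.continuousOn (by fun_prop)) (Continuous.continuousOn (by fun_prop))
      (fun θ _ => (dc _ θ).sub (dc _ θ)) (fun θ _ => ((ds _ θ).const_mul _).neg.sub ((ds _ θ).const_mul _).neg)
      (by simp) (by simp) (fun θ _ => by push_cast; ring) t ht ?_ (π/2/((n+1:ℕ):ℝ)) (by positivity) ?_
    · intro s hs
      rw [hc]
      exact mul_nonneg (by positivity) (cf_nonneg (by linarith) hs _)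
    · intro s hs hse
      rw [hc]
      refine mul_pos (by positivity) (cf_pos (by linarith) hs _ ?_)
      rw [lt_div_iff₀ (by positivity)] at hse
      linarith
  have e : Gf δ (fun θ => cos (n*θ) - cos (((n+1:ℕ):ℝ)*θ)) t = cf δ t n - cf δ t (n+1) := by
    unfold cf Gf
    rw [← intervalIntegral.integral_sub (Gf_int (by linarith) (Continuous.continuousOn (by fun_prop)) t)
      (Gf_int (by linarith) (Continuous.continuousOn (by fun_prop)) t)]
    congr 1; funext θ; ring
  linarith

theorem cf_summable {δ t : ℝ} (hδ : 1 ≤ δ) (ht : t ∈ Ioc 0 π) : Summable (cf δ t) := by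
  rw [← summable_nat_add_iff 1]
  have h : Summable fun n : ℕ => 2 * δ * t ^ (δ-1) * (1 / ((n+1:ℕ):ℝ) ^ 2) :=
    ((summable_nat_add_iff 1).2 (Real.summable_one_div_nat_pow.2 one_lt_two)).mul_left _
  refine Summable.of_nonneg_of_le (fun n => cf_nonneg hδ ht _) (fun n => ?_) h
  have := cf_le hδ ht (n+1) (by omega)
  rwa [mul_one_div]


theorem fs_coeff {δ t : ℝ} (hδ : 0 ≤ δ) [Fact (0 < 2 * π)] (n : ℤ) :
    fourierCoeff (AddCircle.liftIco (2*π) (-π) (fun x : ℝ => ((pp δ (t - |x|) : ℝ) : ℂ))) n =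
      ((1 / π * cf δ t n.natAbs : ℝ) : ℂ) := by
  set h : ℝ → ℂ := fun x => Complex.exp (-(Complex.I * n * x)) * ((pp δ (t - |x|) : ℝ) : ℂ) with hh
  have hpc : Continuous fun x : ℝ => pp δ (t - |x|) := (pp_cont hδ).comp (by fun_prop)
  have hc : Continuous h := by
    have : Continuous fun x : ℝ => ((pp δ (t - |x|) : ℝ) : ℂ) := Complex.continuous_ofReal.comp hpc
    fun_prop
  have hp0 : (π:ℂ) ≠ 0 := by exact_mod_cast pi_ne_zero
  have e1 : fourierCoeff (AddCircle.liftIco (2*π) (-π) (fun x : ℝ => ((pp δ (t - |x|) : ℝ) : ℂ))) n =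
      (1 / (2*π) : ℝ) • ∫ x in (-π)..(-π + 2*π), h x := by
    rw [fourierCoeff_eq_intervalIntegral _ _ (-π)]
    congr 1
    refine intervalIntegral.integral_congr_Ioo_of_le (by linarith [pi_pos]) fun x hx => ?_
    rw [AddCircle.liftIco_coe_apply (Ioo_subset_Ico_self hx), fourier_coe_apply, smul_eq_mul, hh]
    congr 2
    push_cast
    field_simp
  have hcn : Continuous fun x => h (-x) := hc.comp continuous_neg
  have e2 : ∫ x in (-π)..(-π + 2*π), h x = ∫ x in (0:ℝ)..π, (h (-x) + h x) := by
    rw [show -π + 2*π = π by ring, ← intervalIntegral.integral_add_adjacent_intervals (b := 0) (hc.intervalIntegrable _ _) (hc.intervalIntegrable _ _),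
      intervalIntegral.integral_add (hcn.intervalIntegrable _ _) (hc.intervalIntegrable _ _)]
    congr 1
    have := intervalIntegral.integral_comp_neg (a := 0) (b := π) h
    rw [this, neg_zero]
  have e3 : ∫ x in (0:ℝ)..π, (h (-x) + h x) = ∫ x in (0:ℝ)..π, ((2 * (pp δ (t - x) * cos (n.natAbs * x)) : ℝ) : ℂ) := by
    apply intervalIntegral.integral_congr
    intro x hx
    rw [uIcc_of_le pi_pos.le] at hx
    have hcos : cos (n.natAbs * x) = cos (n * x) := by
      rw [Nat.cast_natAbs, Int.cast_abs]
      rcases abs_choice (n:ℝ) with h | h <;> rw [h]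
      rw [neg_mul, cos_neg]
    simp only [hh, abs_neg, abs_of_nonneg hx.1, hcos]
    push_cast
    rw [Complex.cos]
    rw [show -(Complex.I * (n:ℂ) * -(x:ℂ)) = n * x * Complex.I by ring, show -(Complex.I * (n:ℂ) * (x:ℂ)) = -(n * x) * Complex.I by ring]
    ring
  rw [e1, e2, e3, intervalIntegral.integral_ofReal, intervalIntegral.integral_const_mul]
  rw [Complex.real_smul, ← Complex.ofReal_mul, cf, Gf]
  generalize ∫ x in (0:ℝ)..π, pp δ (t - x) * cos (n.natAbs * x) = J
  congr 1
  field_simp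

theorem fs_sum {δ t : ℝ} (hδ : 1 ≤ δ) (ht : t ∈ Ioc 0 π) (θ : ℝ) (hθ : θ ∈ Ioc 0 π) :
    HasSum (fun n : ℕ => 2 * cf δ t n * cos (n * θ)) (π * pp δ (t - θ) + cf δ t 0) := by
  have : Fact (0 < 2 * π) := ⟨by positivity⟩
  have hpc : Continuous fun x : ℝ => pp δ (t - |x|) := (pp_cont (by linarith)).comp (by fun_prop)
  let F : C(AddCircle (2*π), ℂ) := ⟨AddCircle.liftIco (2*π) (-π) (fun x : ℝ => ((pp δ (t - |x|) : ℝ) : ℂ)),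
    AddCircle.liftIco_continuous (by simp only [show -π + 2*π = π by ring, abs_neg])
      (Complex.continuous_ofReal.comp hpc).continuousOn⟩
  have hco : ∀ n, fourierCoeff F n = ((1 / π * cf δ t n.natAbs : ℝ) : ℂ) := fun n => fs_coeff (by linarith) n
  have hs : Summable (fourierCoeff F) := by
    have : fourierCoeff F = fun n => ((1 / π * cf δ t n.natAbs : ℝ) : ℂ) := funext hco
    rw [this, Complex.summable_ofReal]
    apply Summable.mul_left
    have := cf_summable hδ ht
    exact Summable.of_nat_of_neg (by simpa using this) (by simpa using this)
  have hS := (has_pointwise_sum_fourier_series_of_summable hs ((-θ : ℝ) : AddCircle (2*π))).nat_add_neg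
  have hval : F ((-θ : ℝ) : AddCircle (2*π)) = ((pp δ (t - θ) : ℝ) : ℂ) := by
    show AddCircle.liftIco (2*π) (-π) (fun x : ℝ => ((pp δ (t - |x|) : ℝ) : ℂ)) _ = _
    rw [AddCircle.liftIco_coe_apply ⟨by linarith [hθ.2], by linarith [hθ.1, pi_pos]⟩, abs_neg, abs_of_pos hθ.1]
  have hp0 : (π:ℂ) ≠ 0 := by exact_mod_cast pi_ne_zero
  rw [hval] at hS
  simp only [hco, fourier_coe_apply, smul_eq_mul, Int.natAbs_natCast, Int.natAbs_neg, Int.natAbs_zero] at hS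
  rw [← Complex.hasSum_ofReal]
  have h2 := hS.mul_left (π:ℂ)
  have h3 : ∀ n : ℕ, ((2 * cf δ t n * cos (n * θ) : ℝ) : ℂ) = (π:ℂ) *
        (((1 / π * cf δ t n : ℝ) : ℂ) * Complex.exp (2 * π * Complex.I * ((n:ℤ):ℂ) * ((-θ:ℝ):ℂ) / ((2 * π : ℝ):ℂ)) +
          ((1 / π * cf δ t n : ℝ) : ℂ) * Complex.exp (2 * π * Complex.I * ((-(n:ℤ):ℤ):ℂ) * ((-θ:ℝ):ℂ) / ((2 * π : ℝ):ℂ))) := by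
    intro n
    push_cast
    rw [Complex.cos]
    rw [show (2:ℂ) * π * Complex.I * n * -(θ:ℂ) / (2 * π) = -(n * θ) * Complex.I by field_simp,
      show (2:ℂ) * π * Complex.I * -n * -(θ:ℂ) / (2 * π) = (n * θ) * Complex.I by field_simp]
    field_simp
    ring
  have h4 : ((π * pp δ (t - θ) + cf δ t 0 : ℝ) : ℂ) = (π:ℂ) * (((pp δ (t - θ) : ℝ):ℂ) + ((1 / π * cf δ t 0 : ℝ) : ℂ) *
      Complex.exp (2 * π * Complex.I * ((0:ℤ):ℂ) * ((-θ:ℝ):ℂ) / ((2 * π : ℝ):ℂ))) := by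
    push_cast
    simp only [mul_zero, zero_mul, zero_div, Complex.exp_zero]
    field_simp
  rw [h4]
  exact h2.congr_fun h3

theorem Kn_rel (m : ℕ) {α : ℝ} (hα : 0 < α) (n : ℕ) :
    2 * ∫ θ in (0:ℝ)..π, cos (((n+1:ℕ):ℝ) * θ) * uq m α θ = Bk m α (n+1) - Bk m α n := by
  have hu := uq_cont m hα.le
  have hint : ∀ k, IntervalIntegrable (fun θ => Dk k θ * uq m α θ) volume 0 π := fun k =>
    ((Dk_cont k).mul hu).intervalIntegrable _ _
  unfold Bk
  rw [← intervalIntegral.integral_sub (hint _) (hint _),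
    ← intervalIntegral.integral_const_mul]
  congr 1; funext θ
  rw [Dk]; push_cast; ring

theorem base_case_s17 {α δ t : ℝ} (hα : 0 < α) (hα1 : α ≤ 1) (hδ : 2 ≤ δ) (m : ℕ) (ht : t ∈ Ioc 0 π) :
    0 < Gf δ (uq m α) t := by
  have hu := uq_cont m hα.le
  have hδ1 : 1 ≤ δ := by linarith
  have hcs := cf_summable hδ1 ht
  have hc0 := cf_nonneg hδ1 ht
  obtain ⟨M, hM⟩ := isCompact_Icc.exists_bound_of_continuousOn (s := Icc 0 π) hu.continuousOn
  have hM0 : 0 ≤ M := (norm_nonneg _).trans (hM 0 ⟨le_rfl, pi_pos.le⟩)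
  have H := intervalIntegral.hasSum_integral_of_dominated_convergence (a := 0) (b := π) (μ := volume)
    (F := fun (n:ℕ) θ => 2 * cf δ t n * cos (n * θ) * uq m α θ)
    (f := fun θ => (π * pp δ (t - θ) + cf δ t 0) * uq m α θ) (fun n _ => 2 * cf δ t n * M)
    (fun n => Continuous.aestronglyMeasurable (by fun_prop))
    (fun n => Filter.Eventually.of_forall fun θ hθ => by
      rw [uIoc_of_le pi_pos.le] at hθ
      have h1 := hM θ ⟨hθ.1.le, hθ.2⟩
      have h2 := abs_cos_le_one (n * θ)
      have h3 := hc0 n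
      rw [norm_mul, norm_mul, norm_mul, Real.norm_of_nonneg h3, Real.norm_eq_abs (cos _), Real.norm_two]
      calc 2 * cf δ t n * |cos (n*θ)| * ‖uq m α θ‖ ≤ 2 * cf δ t n * 1 * M := by gcongr
        _ = _ := by ring)
    (Filter.Eventually.of_forall fun θ hθ => (hcs.mul_left 2).mul_right M)
    intervalIntegrable_const
    (Filter.Eventually.of_forall fun θ hθ => by
      rw [uIoc_of_le pi_pos.le] at hθ
      exact (fs_sum hδ1 ht θ hθ).mul_right _)
  set K : ℕ → ℝ := fun n => ∫ θ in (0:ℝ)..π, cos ((n:ℝ) * θ) * uq m α θ with hK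
  have eF : ∀ n, ∫ θ in (0:ℝ)..π, 2 * cf δ t n * cos (n * θ) * uq m α θ = 2 * cf δ t n * K n := by
    intro n
    rw [hK, ← intervalIntegral.integral_const_mul]
    congr 1; funext θ; ring
  have K0 : K 0 = Bk m α 0 := by
    simp [hK, Bk, Dk]
  have ef : ∫ θ in (0:ℝ)..π, (π * pp δ (t - θ) + cf δ t 0) * uq m α θ = π * Gf δ (uq m α) t + cf δ t 0 * Bk m α 0 := by
    rw [← K0, hK, Gf, ← intervalIntegral.integral_const_mul, ← intervalIntegral.integral_const_mul,
      ← intervalIntegral.integral_add ((Gf_int (by linarith) hu.continuousOn t).const_mul _) (Continuous.intervalIntegrable (by fun_prop) _ _)]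
    congr 1; funext θ; simp; ring
  simp only [eF] at H
  rw [ef] at H
  have sums : ∀ N, ∑ n ∈ Finset.range (N+1), 2 * cf δ t n * K n =
      cf δ t 0 * Bk m α 0 + ∑ n ∈ Finset.range N, (cf δ t n - cf δ t (n+1)) * Bk m α n + cf δ t N * Bk m α N := by
    intro N
    induction N with
    | zero => simp [K0]; ring
    | succ N ih =>
      rw [Finset.sum_range_succ, ih, Finset.sum_range_succ _ N]
      have := Kn_rel m hα N
      have hk : 2 * K (N+1) = Bk m α (N+1) - Bk m α N := this
      linear_combination cf δ t (N+1) * hk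
  have hpos : 0 < (cf δ t m - cf δ t (m+1)) * Bk m α m :=
    mul_pos (sub_pos.2 (cf_anti hδ ht m)) (Bk_diag m hα)
  have hT := H.tendsto_sum_nat
  have hge : cf δ t 0 * Bk m α 0 + (cf δ t m - cf δ t (m+1)) * Bk m α m ≤ π * Gf δ (uq m α) t + cf δ t 0 * Bk m α 0 := by
    refine ge_of_tendsto hT ?_
    filter_upwards [Filter.eventually_ge_atTop (m+2)] with N hN
    obtain ⟨N, rfl⟩ : ∃ k, N = k + 1 := ⟨N - 1, by omega⟩
    rw [sums]
    have h1 : (cf δ t m - cf δ t (m+1)) * Bk m α m ≤ ∑ n ∈ Finset.range N, (cf δ t n - cf δ t (n+1)) * Bk m α n :=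
      Finset.single_le_sum (f := fun n => (cf δ t n - cf δ t (n+1)) * Bk m α n)
        (fun n _ => mul_nonneg (sub_pos.2 (cf_anti hδ ht n)).le (Bk_nonneg m hα hα1 n))
        (Finset.mem_range.2 (by omega))
    have h2 := mul_nonneg (hc0 N) (Bk_nonneg m hα hα1 N)
    linarith
  have : 0 < π * Gf δ (uq m α) t := by linarith
  exact pos_of_mul_pos_right this pi_pos.le


theorem uq_pos (k : ℕ) : ∀ α δ : ℝ, (k:ℝ) < α → α ≤ k + 1 → (k:ℝ) + 2 ≤ δ →
    ∀ n : ℕ, ∀ t ∈ Ioc 0 π, 0 < Gf δ (uq n α) t := by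
  induction k with
  | zero =>
    intro α δ h1 h2 h3 n t ht
    simp only [Nat.cast_zero, zero_add] at h1 h2 h3
    exact base_case_s17 h1 h2 h3 n ht
  | succ k ih =>
    intro α δ h1 h2 h3 n t ht
    push_cast at h1 h2 h3
    have hk : (0:ℝ) ≤ k := k.cast_nonneg
    exact uq_pos_step (by linarith) (by linarith)
      (ih (α-1) (δ-1) (by linarith) (by linarith) (by linarith)) n t ht

theorem FJ_int {α β δ : ℝ} (hα : 0 ≤ α) (hβ : 0 ≤ β) (hδ : 0 ≤ δ) (n : ℕ) (a b t : ℝ) :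
    IntervalIntegrable (fun θ => (t - θ) ^ δ * jacobiP n a b (Real.cos θ) *
      (Real.sin (θ / 2)) ^ (2 * α) * (Real.cos (θ / 2)) ^ (2 * β)) volume 0 t := by
  have h1 := sth_cont hδ t
  have h2 : Continuous fun θ : ℝ => (Real.sin (θ / 2)) ^ (2 * α) :=
    Continuous.rpow_const (by fun_prop) fun _ => Or.inr (by positivity)
  have h3 : Continuous fun θ : ℝ => (Real.cos (θ / 2)) ^ (2 * β) :=
    Continuous.rpow_const (by fun_prop) fun _ => Or.inr (by positivity)
  have h4 : Continuous fun θ : ℝ => jacobiP n a b (Real.cos θ) := by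
    unfold jacobiP; fun_prop
  exact (((h1.mul h4).mul h2).mul h3).intervalIntegrable _ _

theorem half_nonneg {θ t : ℝ} (ht : t ≤ π) (hθ : θ ∈ Icc 0 t) : 0 ≤ sin (θ/2) ∧ 0 ≤ cos (θ/2) := by
  have h1 := hθ.1
  have h2 := hθ.2
  have h3 := pi_pos
  exact ⟨sin_nonneg_of_nonneg_of_le_pi (by linarith) (by linarith),
    cos_nonneg_of_neg_pi_div_two_le_of_le (by linarith) (by linarith)⟩

theorem FJ_zero {α δ t : ℝ} (hα : 0 < α) (hδ : 0 < δ) (ht : t ∈ Ioc 0 π) (n : ℕ) :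
    FJ n α 0 δ t = Ring.choose ((n:ℝ)+(α-1/2)) n * Gf δ (uq n α) t := by
  rw [Gf_eq hδ (uq_cont n hα.le) ht.1.le ht.2, FJ, ← intervalIntegral.integral_const_mul]
  apply intervalIntegral.integral_congr
  intro θ hθ
  rw [uIcc_of_le ht.1.le] at hθ
  obtain ⟨hs, hc⟩ := half_nonneg ht.2 hθ
  simp only
  rw [mul_zero, Real.rpow_zero, mul_one, show (0:ℝ) - 1/2 = -1/2 by norm_num, jac_three n α _ hα]
  have e1 : (1 - cos θ)/2 = Sh θ := by rw [Sh_cos]; ring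
  have e2 : sin (θ/2) ^ (2*α) = Sh θ ^ α := by
    rw [Sh, Real.rpow_mul hs, Real.rpow_two]
  have e3 : uq n α θ = (∑ j ∈ Finset.range (n+1), qc n α j * Sh θ ^ j) * Sh θ ^ α := by
    rw [uq, Finset.sum_mul]
    refine Finset.sum_congr rfl fun j _ => ?_
    rw [Real.rpow_add_of_nonneg (Sh_nonneg θ) (by positivity) hα.le, Real.rpow_natCast]; ring
  rw [e1, e2, e3]; ring

theorem rpow_two_add {x r : ℝ} (hx : 0 ≤ x) (hr : 0 ≤ r) : x ^ (2 * (r+1)) = x ^ (2*r) * x ^ 2 := by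
  rw [mul_add, mul_one, Real.rpow_add_of_nonneg hx (by positivity) (by norm_num), Real.rpow_two]

theorem FJ_two {α β δ t : ℝ} (hα : 0 < α) (hβ : 0 ≤ β) (hδ : 0 < δ) (ht : t ∈ Ioc 0 π) (n : ℕ) :
    (2*n+α+β+1) * FJ n α (β+1) δ t = (n+1) * FJ (n+1) α β δ t + (n+β+1/2) * FJ n α β δ t := by
  unfold FJ
  rw [← intervalIntegral.integral_const_mul, ← intervalIntegral.integral_const_mul, ← intervalIntegral.integral_const_mul,
    ← intervalIntegral.integral_add ((FJ_int hα.le hβ hδ.le _ _ _ t).const_mul _) ((FJ_int hα.le hβ hδ.le _ _ _ t).const_mul _)]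
  apply intervalIntegral.integral_congr
  intro θ hθ
  rw [uIcc_of_le ht.1.le] at hθ
  obtain ⟨hs, hc⟩ := half_nonneg ht.2 hθ
  simp only
  have e1 : (1 + cos θ)/2 = cos (θ/2)^2 := by rw [Real.cos_sq]; ring_nf
  have j2 := jac_two n (α-1/2) (β-1/2) (cos θ) (by linarith) (by linarith)
  rw [rpow_two_add hc hβ, show β+1-1/2 = β-1/2+1 by ring]
  rw [e1] at j2
  linear_combination ((t-θ)^δ * sin (θ/2) ^ (2*α) * cos (θ/2) ^ (2*β)) * j2

theorem FJ_one {α β δ t : ℝ} (hα : 0 < α) (hβ : 0 ≤ β) (hδ : 0 < δ) (ht : t ∈ Ioc 0 π) (n : ℕ) :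
    FJ n α β δ t - FJ n α (β+1) δ t = FJ n (α+1) β δ t := by
  unfold FJ
  rw [← intervalIntegral.integral_sub (FJ_int hα.le hβ hδ.le _ _ _ t) (FJ_int hα.le (by linarith) hδ.le _ _ _ t)]
  apply intervalIntegral.integral_congr
  intro θ hθ
  rw [uIcc_of_le ht.1.le] at hθ
  obtain ⟨hs, hc⟩ := half_nonneg ht.2 hθ
  simp only
  have e1 : (1 + cos θ)/2 = cos (θ/2)^2 := by rw [Real.cos_sq]; ring_nf
  have e2 : (1 - cos θ)/2 = sin (θ/2)^2 := by rw [Sh_cos, Sh]; ring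
  have j1 := jac_one n (α-1/2) (β-1/2) (cos θ) (by linarith) (by linarith)
  rw [rpow_two_add hc hβ, rpow_two_add hs hα.le, show β+1-1/2 = β-1/2+1 by ring, show α+1-1/2 = α-1/2+1 by ring]
  rw [e1, e2] at j1
  linear_combination ((t-θ)^δ * sin (θ/2) ^ (2*α) * cos (θ/2) ^ (2*β)) * j1

theorem FJ_pos {α δ t : ℝ} (k : ℕ) (h1 : (k:ℝ) < α) (h2 : α ≤ k + 1) (h3 : (k:ℝ) + 2 ≤ δ) (ht : t ∈ Ioc 0 π) (β : ℕ) :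
    ∀ n : ℕ, 0 < FJ n α β δ t := by
  have hk : (0:ℝ) ≤ k := k.cast_nonneg
  have hα : 0 < α := by linarith
  have hδ : 0 < δ := by linarith
  induction β with
  | zero =>
    intro n
    rw [Nat.cast_zero, FJ_zero hα hδ ht]
    exact mul_pos (rc_pos _ _ (by linarith)) (uq_pos k α δ h1 h2 h3 n t ht)
  | succ β ih =>
    intro n
    have h := FJ_two hα (β.cast_nonneg) hδ ht n
    have p1 := ih n
    have p2 := ih (n+1)
    have : 0 < (2*(n:ℝ)+α+β+1) * FJ n α ((β:ℝ)+1) δ t := by rw [h]; positivity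
    push_cast
    exact pos_of_mul_pos_right this (by positivity)

theorem FJ_strict_monotone_in_beta (α : ℝ) (hα : 0 < α) (β : ℕ) (δ : ℝ)
    (hδ : ((⌈α⌉ : ℤ) : ℝ) + 2 ≤ δ) :
    ∀ t ∈ Set.Ioc (0:ℝ) π, ∀ n : ℕ,
      FJ n α ((β : ℝ) + 1) δ t < FJ n α (β : ℝ) δ t := by
  intro t ht n
  obtain ⟨k, hk⟩ := Int.eq_ofNat_of_zero_le (Int.ceil_pos.2 hα).le
  have hkr : ((⌈α⌉ : ℤ) : ℝ) = k := by rw [hk]; rfl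
  have c1 := Int.le_ceil α
  have c2 := Int.ceil_lt_add_one α
  rw [hkr] at c1 c2 hδ
  have hk0 : (0:ℝ) ≤ k := k.cast_nonneg
  have h := FJ_one hα (β.cast_nonneg) (by linarith) ht n (δ := δ)
  have hp := FJ_pos k c2 (by linarith) hδ ht β n
  linarith
end
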